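/- Let q ≡ 1 (mod 5) and ψ ∈ F_q with ψ ≠ 0 and ψ^5 ≠ 1. Define the affine point counts N_X = #{x ∈ F_q^5 : x_1^5+⋯+x_5^5 = 5ψ x_1⋯x_5}, N_Y = #{y ∈ F_q^5 : (y_1+⋯+y_5)^5 = (5ψ)^5 y_1⋯y_5}, N_A = #{(x,y) ∈ F_q^2 : y^5 = x^2(1−x)^3(1−x/ψ^5)^2}, and N_B = #{(x,y) ∈ F_q^2 : y^5 = x^2(1−x)^4(1−x/ψ^5)}. Then N_X = N_Y + 10·q·(q−1)·(N_A − q) + 15·q·(q−1)·(N_B − q). -/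

import Mathlib

open Finset
open scoped Classical

/-! On the torus, detect the equation of the Dwork quintic with a nontrivial additive character `e`
and expand in multiplicative characters `η`. Fix a character of order five and let `κ b`, for `b` in
`ZMod 5`, be its powers. Writing `gᵦ` for the function `η ↦ gaussSum (κ b * η) e`, the count becomes
an average over `η` of sums of products of five `gᵦ` whose classes `b` add up to zero, one of which
is `0`; the mirror only sees the product with classes `(0, 0, 0, 0, 0)`.

The average is taken against a Mellin transform in `t = x₁ ⋯ x₅`. By the Hasse–Davenport product
formula this transform is, up to a constant, the product of the conjugate Gauss sums at all five
classes, so `g₀ g₁ g₂ g₃ g₄` cancels it completely, which contributes a constant since `ψ ^ 5 ≠ 1`.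
The other products are, up to translation of the classes, those with classes `(0, 0, 0, j, -j)` and
`(0, 0, j, j, 3j)` for `j ≠ 0`: three of their factors cancel, and what remains is a finite-field
`₂F₁`, hence a character sum counting points on the curve `A`, respectively `B`. The cancellation
fails at the characters where a Gauss sum is trivial, and these corrections, together with the
constant, are exactly balanced by the points of the quintic outside the torus.

For the product formula, consider the completely multiplicative weight on monic polynomials over `F`
which at the characteristic polynomial of `α` is `η (norm (α ^ n)) * e (trace (α ^ n))`. By the
lifting relation the power sums attached to its `L`-function are those of the Gauss sums of the
`n` characters `χ ^ j * η`, where `χ` has order `n`, so Newton's identities give their product as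
the coefficient of `T ^ n`, a sum over monic polynomials of degree `n` that can be evaluated
directly through the constant term.
-/

namespace DworkQuintic

open Polynomial
open scoped BigOperators

section MonicsOfDegree

variable (R : Type*) [Semiring R] [Fintype R]

/-- The finite set of monic polynomials of degree `n` over a finite ring, built by adding one
constant coefficient at a time. -/
noncomputable def monicsOfDegree : ℕ → Finset R[X]
  | 0 => {1}
  | n + 1 => (monicsOfDegree n ×ˢ univ).image fun p => p.1 * X + C p.2

variable {R}

lemma mem_monicsOfDegree [Nontrivial R] {n : ℕ} {f : R[X]} :
    f ∈ monicsOfDegree R n ↔ f.Monic ∧ f.natDegree = n := by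
  induction n generalizing f with
  | zero =>
    rw [monicsOfDegree, mem_singleton]
    exact ⟨by rintro rfl; simp, fun h => eq_one_of_monic_natDegree_zero h.1 h.2⟩
  | succ n ih =>
    simp only [monicsOfDegree, mem_image, mem_product, mem_univ, and_true, Prod.exists, ih]
    constructor
    · rintro ⟨g, c, ⟨hg, rfl⟩, rfl⟩
      have hdeg : (g * X).natDegree = g.natDegree + 1 := natDegree_mul_X hg.ne_zero
      refine ⟨monic_of_natDegree_le_of_coeff_eq_one (g.natDegree + 1) ?_ ?_, ?_⟩
      · rw [natDegree_add_C, hdeg]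
      · simp [hg.coeff_natDegree]
      · rw [natDegree_add_C, hdeg]
    · rintro ⟨hf, hn⟩
      have hdivX : f.divX.natDegree = n := by rw [natDegree_divX_eq_natDegree_tsub_one, hn]; rfl
      refine ⟨f.divX, f.coeff 0, ⟨?_, hdivX⟩, divX_mul_X_add f⟩
      rw [Monic, leadingCoeff, hdivX, coeff_divX, ← hn]
      exact hf

lemma sum_monicsOfDegree_succ {M : Type*} [AddCommMonoid M] (F : R[X] → M) (n : ℕ) :
    ∑ f ∈ monicsOfDegree R (n + 1), F f = ∑ g ∈ monicsOfDegree R n, ∑ c, F (g * X + C c) := by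
  rw [monicsOfDegree, sum_image, sum_product]
  rintro ⟨g, c⟩ - ⟨h, d⟩ - heq
  have hcoeff (i : ℕ) := congrArg (coeff · i) heq
  refine Prod.ext (Polynomial.ext fun i => ?_) ?_
  · simpa using hcoeff (i + 1)
  · simpa using hcoeff 0

end MonicsOfDegree

section ConjugatePolynomial

variable {K : Type*} [Field K]

lemma monic_eq_pow_of_forall_irreducible_dvd {p g : K[X]} (hg : g.Monic)
    (h : ∀ r : K[X], r.Monic → Irreducible r → r ∣ g → r = p) : ∃ k, g = p ^ k := by
  refine ⟨Multiset.card (UniqueFactorizationMonoid.normalizedFactors g), ?_⟩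
  rw [← Multiset.prod_replicate, ← Multiset.eq_replicate.2 ⟨rfl, fun r hr => ?_⟩,
    UniqueFactorizationMonoid.prod_normalizedFactors_eq hg.ne_zero, hg.normalize_eq_self]
  have hirr := UniqueFactorizationMonoid.irreducible_of_normalized_factor r hr
  refine h r ?_ hirr (UniqueFactorizationMonoid.dvd_of_mem_normalizedFactors hr)
  rw [← UniqueFactorizationMonoid.normalize_normalized_factor r hr]
  exact monic_normalize hirr.ne_zero

variable {L : Type*} [Field L] [Algebra K L]

variable (K) in
/-- The characteristic polynomial of `α` in a finite extension `L / K`, encoded as the power of the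
minimal polynomial that has degree `[L : K]`. -/
noncomputable def fieldCharpoly (α : L) : K[X] :=
  minpoly K α ^ (Module.finrank K L / (minpoly K α).natDegree)

variable [FiniteDimensional K L]

lemma fieldCharpoly_monic (α : L) : (fieldCharpoly K α).Monic :=
  (minpoly.monic (Algebra.IsIntegral.isIntegral α)).pow _

lemma natDegree_fieldCharpoly (α : L) :
    (fieldCharpoly K α).natDegree = Module.finrank K L := by
  rw [fieldCharpoly, natDegree_pow,
    Nat.div_mul_cancel (minpoly.degree_dvd (Algebra.IsIntegral.isIntegral α))]

lemma fieldCharpoly_eq_of_natDegree {α : L} {k : ℕ}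
    (h : (minpoly K α ^ k).natDegree = Module.finrank K L) :
    fieldCharpoly K α = minpoly K α ^ k := by
  rw [fieldCharpoly, ← h, natDegree_pow, Nat.mul_div_cancel _
    (minpoly.natDegree_pos (Algebra.IsIntegral.isIntegral α))]

lemma map_fieldCharpoly [IsGalois K L] (α : L) :
    (fieldCharpoly K α).map (algebraMap K L) = ∏ σ : Gal(L/K), (X - C (σ α)) := by
  have hmonic : (∏ σ : Gal(L/K), (X - C (σ α))).Monic :=
    monic_prod_of_monic _ _ fun _ _ => monic_X_sub_C _
  obtain ⟨g, hg⟩ := Algebra.IsInvariant.charpoly_mem_lifts K L Gal(L/K) α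
  simp only [MulSemiringAction.charpoly_eq, AlgEquiv.smul_def, coe_mapRingHom] at hg
  have hgm : g.Monic := monic_of_injective (algebraMap K L).injective (hg ▸ hmonic)
  have hgdeg : g.natDegree = Module.finrank K L := by
    rw [← natDegree_map (algebraMap K L), hg,
      natDegree_prod_of_monic _ _ fun _ _ => monic_X_sub_C _]
    simp [← IsGalois.card_aut_eq_finrank, Nat.card_eq_fintype_card]
  have hfactor (r : K[X]) (hrm : r.Monic) (hr : Irreducible r) (hrg : r ∣ g) :
      r = minpoly K α := by
    have hdvd : r.map (algebraMap K L) ∣ ∏ σ : Gal(L/K), (X - C (σ α)) :=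
      hg ▸ Polynomial.map_dvd (algebraMap K L) hrg
    have hsplits : (r.map (algebraMap K L)).Splits :=
      Splits.of_dvd (.prod fun _ _ => .X_sub_C _) hmonic.ne_zero hdvd
    obtain ⟨β, hβ⟩ := hsplits.exists_eval_eq_zero
      (by rw [degree_map]; exact (degree_pos_of_irreducible hr).ne')
    obtain ⟨σ, -, hσ⟩ : ∃ σ ∈ (univ : Finset Gal(L/K)), (X - C (σ α)).eval β = 0 := by
      rw [← prod_eq_zero_iff, ← eval_prod]
      exact eval_eq_zero_of_dvd_of_eval_eq_zero hdvd hβ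
    obtain rfl : β = σ α := by simpa [sub_eq_zero] using hσ
    rw [minpoly.eq_of_irreducible_of_monic (x := σ α) hr
      (by rwa [aeval_def, eval₂_eq_eval_map]) hrm, minpoly.algEquiv_eq σ]
  obtain ⟨k, rfl⟩ := monic_eq_pow_of_forall_irreducible_dvd hgm hfactor
  rw [fieldCharpoly_eq_of_natDegree hgdeg, hg]

lemma fieldCharpoly_dvd_mul_and_not_dvd_iff {Q h : K[X]} (hQ : Irreducible Q) (hQm : Q.Monic)
    (hh : h ≠ 0) (α : L) :
    (fieldCharpoly K α ∣ Q * h ∧ ¬ fieldCharpoly K α ∣ h) ↔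
      minpoly K α = Q ∧ Module.finrank K L = Q.natDegree * (multiplicity Q h + 1) := by
  have hfin : FiniteMultiplicity Q h :=
    finiteMultiplicity_of_degree_pos_of_monic (degree_pos_of_irreducible hQ) hQm hh
  have hint : IsIntegral K α := Algebra.IsIntegral.isIntegral α
  obtain ⟨k, hk⟩ := minpoly.degree_dvd hint
  obtain ⟨j, rfl⟩ : ∃ j, k = j + 1 := Nat.exists_eq_succ_of_ne_zero <| by
    rintro rfl
    exact Module.finrank_pos.ne' hk
  have hpow : fieldCharpoly K α = minpoly K α ^ (j + 1) :=
    fieldCharpoly_eq_of_natDegree (by rw [natDegree_pow, hk, mul_comm])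
  have hmin : minpoly K α = Q →
      ((fieldCharpoly K α ∣ Q * h ∧ ¬ fieldCharpoly K α ∣ h) ↔ j = multiplicity Q h) := by
    rintro rfl
    rw [hpow, pow_succ', mul_dvd_mul_iff_left (minpoly.ne_zero hint), ← pow_succ',
      hfin.pow_dvd_iff_le_multiplicity, hfin.pow_dvd_iff_le_multiplicity]
    omega
  rw [hk]
  constructor
  · intro hdvd
    have hα : minpoly K α = Q := by
      by_contra hne
      have hcop : IsCoprime (minpoly K α) Q := by
        rw [(minpoly.irreducible hint).coprime_iff_not_dvd]
        exact fun hd => hne (eq_of_monic_of_associated (minpoly.monic hint) hQm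
          ((minpoly.irreducible hint).associated_of_dvd hQ hd))
      rw [hpow] at hdvd
      exact hdvd.2 (hcop.pow_left.dvd_of_dvd_mul_left hdvd.1)
    exact ⟨hα, by rw [hα, (hmin hα).1 hdvd]⟩
  · rintro ⟨hα, hdeg⟩
    rw [hα] at hdeg
    have := Nat.eq_of_mul_eq_mul_left hQ.natDegree_pos hdeg
    exact (hmin hα).2 (by omega)

end ConjugatePolynomial

section ConjugateCount

variable {K L : Type*} [Field K] [Finite K] [Field L] [Fintype L] [Algebra K L]

lemma card_filter_minpoly_eq {Q : K[X]} (hQ : Irreducible Q) (hQm : Q.Monic)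
    (hdeg : Q.natDegree ∣ Module.finrank K L) :
    #{α : L | minpoly K α = Q} = Q.natDegree := by
  have : Fact (Irreducible Q) := ⟨hQ⟩
  obtain ⟨φ⟩ : Nonempty (AdjoinRoot Q →ₐ[K] L) := by
    apply FiniteField.nonempty_algHom_of_finrank_dvd
    rwa [(AdjoinRoot.powerBasis hQ.ne_zero).finrank, AdjoinRoot.powerBasis_dim]
  have hroot : aeval (φ (AdjoinRoot.root Q)) Q = 0 := by
    rw [aeval_algHom_apply, AdjoinRoot.aeval_eq, AdjoinRoot.mk_self, map_zero]
  have hsplits : (Q.map (algebraMap K L)).Splits := by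
    rw [minpoly.eq_of_irreducible_of_monic hQ hroot hQm]
    exact Normal.splits inferInstance _
  rw [← card_rootSet_eq_natDegree (PerfectField.separable_of_irreducible hQ) hsplits,
    ← Set.toFinset_card]
  congr 1
  ext α
  simp only [mem_filter, mem_univ, true_and, Set.mem_toFinset, mem_rootSet]
  constructor
  · rintro rfl
    exact ⟨hQm.ne_zero, minpoly.aeval _ _⟩
  · rintro ⟨-, hα⟩
    exact (minpoly.eq_of_irreducible_of_monic hQ hα hQm).symm

lemma card_filter_fieldCharpoly_dvd_mul {Q h : K[X]} (hQ : Irreducible Q) (hQm : Q.Monic)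
    (hh : h ≠ 0) :
    #{α : L | fieldCharpoly K α ∣ Q * h} = #{α : L | fieldCharpoly K α ∣ h} +
      if Module.finrank K L = Q.natDegree * (multiplicity Q h + 1) then Q.natDegree else 0 := by
  rw [← card_filter_add_card_filter_not (s := ({α : L | fieldCharpoly K α ∣ Q * h} : Finset L))
    (fun α => fieldCharpoly K α ∣ h), filter_filter, filter_filter]
  congr 2
  · exact filter_congr fun α _ => and_iff_right_of_imp fun hα => hα.mul_left Q
  · simp_rw [fieldCharpoly_dvd_mul_and_not_dvd_iff hQ hQm hh]
    split_ifs with hdeg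
    · simp only [hdeg, and_true]
      exact card_filter_minpoly_eq hQ hQm (hdeg ▸ dvd_mul_right _ _)
    · simp [hdeg]

variable (E : ℕ → Type*) [∀ k, Field (E k)] [∀ k, Fintype (E k)] [∀ k, Algebra K (E k)]
  (hE : ∀ k, Module.finrank K (E k) = k + 1)
include hE

lemma sum_card_filter_fieldCharpoly_dvd {f : K[X]} (hf : f.Monic) {N : ℕ}
    (hN : f.natDegree ≤ N) :
    ∑ k ∈ range N, #{α : E k | fieldCharpoly K α ∣ f} = f.natDegree := by
  induction hn : f.natDegree using Nat.strong_induction_on generalizing f with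
  | _ n ih =>
  by_cases hunit : IsUnit f
  · obtain rfl := hf.isUnit_iff.1 hunit
    rw [← hn, natDegree_one]
    refine sum_eq_zero fun k _ => card_eq_zero.2 (filter_eq_empty_iff.2 fun α _ hdvd => ?_)
    have := natDegree_le_of_dvd hdvd one_ne_zero
    rw [natDegree_fieldCharpoly, hE, natDegree_one] at this
    omega
  obtain ⟨Q, hQm, hQ, h, rfl⟩ := exists_monic_irreducible_factor f hunit
  have hhm : h.Monic := hQm.of_mul_monic_left hf
  have hQpos := hQ.natDegree_pos
  rw [hQm.natDegree_mul hhm] at hn hN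
  have hmult : multiplicity Q h * Q.natDegree ≤ h.natDegree := by
    rw [← natDegree_pow]
    exact natDegree_le_of_dvd (pow_multiplicity_dvd Q h) hhm.ne_zero
  obtain ⟨d, hd⟩ : ∃ d, Q.natDegree * (multiplicity Q h + 1) = d + 1 :=
    Nat.exists_eq_succ_of_ne_zero (by positivity)
  simp_rw [card_filter_fieldCharpoly_dvd_mul hQ hQm hhm.ne_zero, hE, sum_add_distrib,
    ih h.natDegree (by omega) hhm (by omega) rfl, hd, Nat.add_right_cancel_iff, sum_ite_eq']
  rw [if_pos (mem_range.2 (by nlinarith)), ← hn, add_comm]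

end ConjugateCount

section LogDerivative

variable {K : Type*} [Field K] [Fintype K]

lemma sum_filter_dvd_monicsOfDegree {R : Type*} [CommSemiring R] {w : K[X] → R}
    (hw : ∀ f g : K[X], f.Monic → g.Monic → w (f * g) = w f * w g) {p : K[X]} (hp : p.Monic)
    {n : ℕ} (hn : p.natDegree ≤ n) :
    ∑ f ∈ monicsOfDegree K n with p ∣ f, w f =
      w p * ∑ g ∈ monicsOfDegree K (n - p.natDegree), w g := by
  rw [mul_sum]
  symm
  refine sum_bij (fun g _ => p * g) (fun g hg => ?_) (fun g _ g' _ h => ?_) (fun f hf => ?_)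
    fun g hg => ?_
  · rw [mem_monicsOfDegree] at hg
    rw [mem_filter, mem_monicsOfDegree, hp.natDegree_mul hg.1]
    exact ⟨⟨hp.mul hg.1, by omega⟩, dvd_mul_right _ _⟩
  · exact mul_left_cancel₀ hp.ne_zero h
  · rw [mem_filter, mem_monicsOfDegree] at hf
    obtain ⟨⟨hfm, hfdeg⟩, g, rfl⟩ := hf
    have hg : g.Monic := hp.of_mul_monic_left hfm
    rw [hp.natDegree_mul hg] at hfdeg
    exact ⟨g, mem_monicsOfDegree.2 ⟨hg, by omega⟩, rfl⟩
  · exact (hw _ _ hp (mem_monicsOfDegree.1 hg).1).symm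

variable (E : ℕ → Type*) [∀ k, Field (E k)] [∀ k, Fintype (E k)] [∀ k, Algebra K (E k)]
  (hE : ∀ k, Module.finrank K (E k) = k + 1)
include hE

/-- The coefficient form of `T Z'(T) = Z(T) ∑ₖ (∑ α : E k, w (fieldCharpoly K α)) T ^ (k + 1)` for
the zeta function `Z(T) = ∑ w(f) T ^ deg f`. -/
lemma natCast_mul_sum_monicsOfDegree {R : Type*} [CommSemiring R] {w : K[X] → R}
    (hw : ∀ f g : K[X], f.Monic → g.Monic → w (f * g) = w f * w g) (n : ℕ) :
    (n : R) * ∑ f ∈ monicsOfDegree K n, w f =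
      ∑ k ∈ range n, (∑ α : E k, w (fieldCharpoly K α)) *
        ∑ f ∈ monicsOfDegree K (n - (k + 1)), w f := by
  calc (n : R) * ∑ f ∈ monicsOfDegree K n, w f
      = ∑ f ∈ monicsOfDegree K n, ∑ k ∈ range n, ∑ α : E k with fieldCharpoly K α ∣ f, w f := by
        rw [mul_sum]
        refine sum_congr rfl fun f hf => ?_
        obtain ⟨hfm, hfdeg⟩ := mem_monicsOfDegree.1 hf
        simp_rw [sum_const, nsmul_eq_mul, ← sum_mul, ← Nat.cast_sum,
          sum_card_filter_fieldCharpoly_dvd E hE hfm hfdeg.le, hfdeg]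
    _ = ∑ k ∈ range n, ∑ α : E k, ∑ f ∈ monicsOfDegree K n with fieldCharpoly K α ∣ f, w f := by
        simp_rw [sum_filter]
        rw [sum_comm]
        exact sum_congr rfl fun k _ => sum_comm
    _ = _ := by
        refine sum_congr rfl fun k hk => ?_
        rw [sum_mul]
        refine sum_congr rfl fun α _ => ?_
        rw [sum_filter_dvd_monicsOfDegree hw (fieldCharpoly_monic α), natDegree_fieldCharpoly, hE]
        rw [natDegree_fieldCharpoly, hE]
        exact mem_range.1 hk

end LogDerivative

section PowerSums

variable {K : Type*} [Field K]

/-- The product of the roots of a monic polynomial, counted with multiplicity. -/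
def rootProduct (f : K[X]) : K := (-1) ^ f.natDegree * f.coeff 0

lemma rootProduct_mul {f g : K[X]} (hf : f.Monic) (hg : g.Monic) :
    rootProduct (f * g) = rootProduct f * rootProduct g := by
  simp only [rootProduct, hf.natDegree_mul hg, mul_coeff_zero]
  ring

lemma rootProduct_X_sub_C (a : K) : rootProduct (X - C a) = a := by
  simp [rootProduct]

/-- Minus the logarithmic derivative `- T R'(T) / R(T)` of the reversed polynomial
`R = ∏ (1 - α T)`; its coefficients are the power sums of the roots `α`. -/
noncomputable def powerSumSeries (f : K[X]) : PowerSeries K :=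
  -(PowerSeries.X * PowerSeries.derivative K (f.reverse : PowerSeries K) *
    (f.reverse : PowerSeries K)⁻¹)

/-- The sum of the `n`-th powers of the roots of a monic polynomial, for `n ≥ 1`. -/
noncomputable def powerSum (n : ℕ) (f : K[X]) : K := PowerSeries.coeff n (powerSumSeries f)

lemma constantCoeff_reverse {f : K[X]} (hf : f.Monic) :
    PowerSeries.constantCoeff (f.reverse : PowerSeries K) = 1 := by
  rw [← PowerSeries.coeff_zero_eq_constantCoeff_apply, coeff_coe, coeff_zero_reverse]
  exact hf

lemma reverse_mul_inv {f : K[X]} (hf : f.Monic) :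
    (f.reverse : PowerSeries K) * (f.reverse : PowerSeries K)⁻¹ = 1 :=
  PowerSeries.mul_inv_cancel _ (by rw [constantCoeff_reverse hf]; exact one_ne_zero)

lemma powerSumSeries_mul {f g : K[X]} (hf : f.Monic) (hg : g.Monic) :
    powerSumSeries (f * g) = powerSumSeries f + powerSumSeries g := by
  simp only [powerSumSeries, reverse_mul_of_domain, Polynomial.coe_mul, PowerSeries.mul_inv_rev,
    Derivation.leibniz, smul_eq_mul]
  set Rf : PowerSeries K := ↑f.reverse
  set Rg : PowerSeries K := ↑g.reverse
  linear_combination (-PowerSeries.X * PowerSeries.derivative K Rg * Rg⁻¹) * reverse_mul_inv hf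
    - (PowerSeries.X * PowerSeries.derivative K Rf * Rf⁻¹) * reverse_mul_inv hg

lemma powerSum_mul (n : ℕ) {f g : K[X]} (hf : f.Monic) (hg : g.Monic) :
    powerSum n (f * g) = powerSum n f + powerSum n g := by
  rw [powerSum, powerSumSeries_mul hf hg, map_add, powerSum, powerSum]

lemma reverse_X_sub_C (a : K) : (X - C a).reverse = 1 - C a * X := by
  ext (_ | _ | n)
  · simp [coeff_zero_reverse]
  · simp [coeff_one_reverse, coeff_one]
  · rw [coeff_eq_zero_of_natDegree_lt, coeff_sub, coeff_C_mul, coeff_X, coeff_one]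
    · simp
    · exact (reverse_natDegree_le _).trans_lt (by rw [natDegree_X_sub_C]; omega)

lemma powerSum_X_sub_C {n : ℕ} (hn : n ≠ 0) (a : K) : powerSum n (X - C a) = a ^ n := by
  have hinv : ((X - C a).reverse : PowerSeries K)⁻¹ = PowerSeries.mk (a ^ ·) := by
    rw [PowerSeries.inv_eq_iff_mul_eq_one (by rw [constantCoeff_reverse (monic_X_sub_C a)]; simp),
      reverse_X_sub_C]
    ext (_ | m)
    · simp
    · simp [mul_sub, ← mul_assoc, PowerSeries.coeff_succ_mul_X, pow_succ, PowerSeries.coeff_one]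
  obtain ⟨m, rfl⟩ := Nat.exists_eq_succ_of_ne_zero hn
  rw [powerSum, powerSumSeries, hinv, reverse_X_sub_C]
  simp [mul_assoc, PowerSeries.coeff_succ_X_mul, pow_succ']

lemma powerSum_add_C {f : K[X]} (hf : f.Monic) (hf0 : f.natDegree ≠ 0) (c : K) :
    powerSum f.natDegree (f + C c) = powerSum f.natDegree f - f.natDegree * c := by
  obtain ⟨n, hn⟩ := Nat.exists_eq_succ_of_ne_zero hf0
  have hfc : (f + C c).Monic := by
    refine hf.add_of_left (degree_C_le.trans_lt ?_)
    rwa [← natDegree_pos_iff_degree_pos, Nat.pos_iff_ne_zero]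
  have hreverse : ((f + C c).reverse : PowerSeries K) =
      (f.reverse : PowerSeries K) + PowerSeries.C c * PowerSeries.X ^ (n + 1) := by
    rw [reverse_add_C, hn]
    simp
  have hderiv : PowerSeries.derivative K ((f + C c).reverse : PowerSeries K) =
      PowerSeries.derivative K (f.reverse : PowerSeries K) +
        PowerSeries.C c * PowerSeries.C (n + 1 : K) * PowerSeries.X ^ n := by
    rw [hreverse]
    simp only [map_add, Derivation.leibniz, Derivation.leibniz_pow, add_tsub_cancel_right,
      PowerSeries.derivative_X, smul_eq_mul, mul_one, nsmul_eq_mul, Nat.cast_add, Nat.cast_one,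
      PowerSeries.derivative_C, mul_zero, add_zero, map_natCast, map_one]
    ring
  have hdiff : powerSumSeries (f + C c) - powerSumSeries f =
      PowerSeries.X ^ (n + 1) * (-PowerSeries.C c * ((f + C c).reverse : PowerSeries K)⁻¹ *
        (PowerSeries.C (n + 1 : K) + powerSumSeries f)) := by
    simp only [powerSumSeries, hderiv]
    linear_combination PowerSeries.X * PowerSeries.derivative K (f.reverse : PowerSeries K) *
      (-(f.reverse : PowerSeries K)⁻¹ * reverse_mul_inv hfc +
        ((f + C c).reverse : PowerSeries K)⁻¹ * reverse_mul_inv hf +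
        ((f + C c).reverse : PowerSeries K)⁻¹ * (f.reverse : PowerSeries K)⁻¹ * hreverse)
  have hconst : PowerSeries.constantCoeff (powerSumSeries f) = 0 := by simp [powerSumSeries]
  have hcoeff := congrArg (PowerSeries.coeff (n + 1)) hdiff
  rw [map_sub, PowerSeries.coeff_X_pow_mul', if_pos le_rfl, Nat.sub_self,
    PowerSeries.coeff_zero_eq_constantCoeff_apply] at hcoeff
  simp only [map_mul, map_neg, map_add, PowerSeries.constantCoeff_inv, constantCoeff_reverse hfc,
    PowerSeries.constantCoeff_C, hconst] at hcoeff
  rw [hn, powerSum, powerSum]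
  push_cast
  linear_combination hcoeff

lemma powerSum_map {L : Type*} [Field L] (φ : K →+* L) {f : K[X]} (hf : f.Monic) (n : ℕ) :
    powerSum n (f.map φ) = φ (powerSum n f) := by
  have hreverse : ((f.map φ).reverse : PowerSeries L) = (f.reverse : PowerSeries K).map φ := by
    ext
    simp [coeff_reverse]
  have hderiv : PowerSeries.derivative L ((f.reverse : PowerSeries K).map φ) =
      (PowerSeries.derivative K (f.reverse : PowerSeries K)).map φ := by
    ext
    simp [PowerSeries.coeff_derivative]
  have hinv : ((f.reverse : PowerSeries K).map φ)⁻¹ = ((f.reverse : PowerSeries K)⁻¹).map φ := by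
    rw [PowerSeries.inv_eq_iff_mul_eq_one
      (by rw [← hreverse, constantCoeff_reverse (hf.map φ)]; exact one_ne_zero), ← map_mul,
      mul_comm, reverse_mul_inv hf, map_one]
  rw [powerSum, powerSumSeries, hreverse, hderiv, hinv, ← PowerSeries.map_X φ, ← map_mul,
    ← map_mul, ← map_neg, PowerSeries.coeff_map]
  rfl

lemma powerSum_prod_X_sub_C {ι : Type*} (s : Finset ι) (a : ι → K) {n : ℕ} (hn : n ≠ 0) :
    powerSum n (∏ i ∈ s, (X - C (a i))) = ∑ i ∈ s, a i ^ n := by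
  induction s using Finset.induction_on with
  | empty => simp [powerSum, powerSumSeries, ← C_1, -map_one]
  | insert i s hi ih =>
    rw [prod_insert hi, sum_insert hi, powerSum_mul n (monic_X_sub_C _)
      (monic_prod_of_monic _ _ fun _ _ => monic_X_sub_C _), powerSum_X_sub_C hn, ih]

lemma rootProduct_prod_X_sub_C {ι : Type*} (s : Finset ι) (a : ι → K) :
    rootProduct (∏ i ∈ s, (X - C (a i))) = ∏ i ∈ s, a i := by
  induction s using Finset.induction_on with
  | empty => simp [rootProduct]
  | insert i s hi ih =>
    rw [prod_insert hi, prod_insert hi, rootProduct_mul (monic_X_sub_C _)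
      (monic_prod_of_monic _ _ fun _ _ => monic_X_sub_C _), rootProduct_X_sub_C, ih]

variable {L : Type*} [Field L] [Algebra K L] [FiniteDimensional K L] [IsGalois K L]

lemma rootProduct_fieldCharpoly (α : L) :
    rootProduct (fieldCharpoly K α) = Algebra.norm K α := by
  apply (algebraMap K L).injective
  rw [Algebra.norm_eq_prod_automorphisms, ← rootProduct_prod_X_sub_C, ← map_fieldCharpoly]
  simp [rootProduct]

lemma powerSum_fieldCharpoly {n : ℕ} (hn : n ≠ 0) (α : L) :
    powerSum n (fieldCharpoly K α) = Algebra.trace K L (α ^ n) := by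
  apply (algebraMap K L).injective
  rw [trace_eq_sum_automorphisms, ← powerSum_map _ (fieldCharpoly_monic α), map_fieldCharpoly,
    powerSum_prod_X_sub_C _ _ hn]
  simp

lemma nextCoeff_fieldCharpoly (α : L) :
    (fieldCharpoly K α).nextCoeff = -Algebra.trace K L α := by
  apply (algebraMap K L).injective
  rw [map_neg, trace_eq_sum_automorphisms, ← prod_X_sub_C_nextCoeff, ← map_fieldCharpoly,
    nextCoeff_map_eq]

end PowerSums

section GaussWeight

variable {K R : Type*} [Field K] [CommRing R] (χ : MulChar K R) (e : AddChar K R)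

/-- The completely multiplicative weight on monic polynomials whose value at the characteristic
polynomial of `α` is `χ (norm α) * e (trace α)`. -/
noncomputable def gaussWeight (f : K[X]) : R := χ (rootProduct f) * e (-f.nextCoeff)

lemma gaussWeight_mul {f g : K[X]} (hf : f.Monic) (hg : g.Monic) :
    gaussWeight χ e (f * g) = gaussWeight χ e f * gaussWeight χ e g := by
  simp only [gaussWeight, rootProduct_mul hf hg, hf.nextCoeff_mul hg, neg_add, map_mul,
    AddChar.map_add_eq_mul]
  ring

lemma gaussWeight_fieldCharpoly {L : Type*} [Field L] [Algebra K L] [FiniteDimensional K L]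
    [IsGalois K L] (α : L) :
    gaussWeight χ e (fieldCharpoly K α) = χ (Algebra.norm K α) * e (Algebra.trace K L α) := by
  rw [gaussWeight, rootProduct_fieldCharpoly, nextCoeff_fieldCharpoly, neg_neg]

lemma nextCoeff_mul_X_add_C {g : K[X]} (hg : g.natDegree ≠ 0) (c : K) :
    (g * X + C c).nextCoeff = g.nextCoeff := by
  obtain ⟨n, hn⟩ := Nat.exists_eq_succ_of_ne_zero hg
  have hdeg : (g * X + C c).natDegree = n + 2 := by
    rw [natDegree_add_C, natDegree_mul_X (by rintro rfl; simp at hg), hn]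
  rw [nextCoeff_of_natDegree_pos (by omega), nextCoeff_of_natDegree_pos (by omega), hdeg, hn]
  simp

variable [Fintype K]

lemma sum_gaussWeight_zero : ∑ f ∈ monicsOfDegree K 0, gaussWeight χ e f = 1 := by
  simp [monicsOfDegree, gaussWeight, rootProduct, nextCoeff]

lemma sum_gaussWeight_one : ∑ f ∈ monicsOfDegree K 1, gaussWeight χ e f = gaussSum χ e := by
  rw [sum_monicsOfDegree_succ, monicsOfDegree, sum_singleton, gaussSum,
    ← Equiv.sum_comp (Equiv.neg K)]
  refine sum_congr rfl fun c _ => ?_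
  rw [gaussWeight, one_mul, Equiv.neg_apply, C_neg, ← sub_eq_add_neg, rootProduct_X_sub_C,
    nextCoeff_X_sub_C, neg_neg]

variable [IsDomain R] {e}

lemma sum_apply_neg_nextCoeff (he : e ≠ 1) (n : ℕ) :
    ∑ f ∈ monicsOfDegree K (n + 1), e (-f.nextCoeff) = 0 := by
  induction n with
  | zero =>
    rw [sum_monicsOfDegree_succ, monicsOfDegree, sum_singleton,
      ← AddChar.sum_eq_zero_of_ne_one he, ← Equiv.sum_comp (Equiv.neg K) e]
    simp [nextCoeff_X_add_C]
  | succ n ih =>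
    have hnext (g : K[X]) (hg : g ∈ monicsOfDegree K (n + 1)) (c : K) :
        (g * X + C c).nextCoeff = g.nextCoeff :=
      nextCoeff_mul_X_add_C (by rw [(mem_monicsOfDegree.1 hg).2]; simp) c
    rw [sum_monicsOfDegree_succ, sum_congr rfl fun g hg => sum_congr rfl fun c _ => by
      rw [hnext g hg c]]
    simp_rw [sum_const, ← smul_sum, ih, smul_zero]

lemma sum_gaussWeight_add_two (he : e ≠ 1) (n : ℕ) :
    ∑ f ∈ monicsOfDegree K (n + 2), gaussWeight χ e f = 0 := by
  have hfactor (g : K[X]) (hg : g ∈ monicsOfDegree K (n + 1)) (c : K) :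
      gaussWeight χ e (g * X + C c) = χ ((-1) ^ (n + 2) * c) * e (-g.nextCoeff) := by
    obtain ⟨hgm, hgdeg⟩ := mem_monicsOfDegree.1 hg
    rw [gaussWeight, nextCoeff_mul_X_add_C (by omega), rootProduct, natDegree_add_C,
      natDegree_mul_X hgm.ne_zero, hgdeg]
    simp
  rw [sum_monicsOfDegree_succ, sum_congr rfl fun g hg => sum_congr rfl fun c _ => hfactor g hg c]
  simp_rw [← sum_mul, ← mul_sum, sum_apply_neg_nextCoeff he, mul_zero]

end GaussWeight

section PowerMap

variable {K R : Type*} [Field K] [Finite K] [CommRing R]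

lemma exists_isPrimitiveRoot_orderOf (χ : MulChar K R) :
    ∃ ζ : K, IsPrimitiveRoot ζ (orderOf χ) := by
  cases nonempty_fintype K
  obtain ⟨g, hg⟩ := IsCyclic.exists_generator (α := Kˣ)
  have hgK : IsPrimitiveRoot (g : K) (Fintype.card K - 1) := by
    rw [← Nat.card_eq_fintype_card, ← Nat.card_units, ← orderOf_eq_card_of_forall_mem_zpowers hg,
      ← orderOf_units]
    exact IsPrimitiveRoot.orderOf _
  obtain ⟨k, hk⟩ := χ.orderOf_dvd_card_sub_one
  exact ⟨_, hgK.pow (Nat.sub_pos_of_lt Fintype.one_lt_card) (hk.trans (mul_comm _ _))⟩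

lemma exists_pow_orderOf_eq_iff (χ : MulChar K R) {b : K} (hb : b ≠ 0) :
    (∃ a, a ^ orderOf χ = b) ↔ χ b = 1 := by
  constructor
  · rintro ⟨a, rfl⟩
    have ha : a ≠ 0 := by
      rintro rfl
      exact hb (zero_pow χ.orderOf_pos.ne')
    rw [map_pow, ← MulChar.pow_apply' χ χ.orderOf_pos.ne', pow_orderOf_eq_one,
      MulChar.one_apply ha.isUnit]
  · intro hχb
    obtain ⟨g, hg⟩ := IsCyclic.exists_generator (α := Kˣ)
    obtain ⟨k, hk⟩ := mem_powers_iff_mem_zpowers.2 (hg (Units.mk0 b hb))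
    have hbk : b = (g : K) ^ k := by simpa using congrArg Units.val hk.symm
    obtain ⟨m, rfl⟩ : orderOf χ ∣ k := orderOf_dvd_of_pow_eq_one <| by
      rw [MulChar.eq_iff hg, MulChar.pow_apply_coe, MulChar.one_apply_coe, ← map_pow, ← hbk, hχb]
    exact ⟨(g : K) ^ m, by rw [hbk, ← pow_mul, mul_comm]⟩

end PowerMap

section PowerSubstitution

variable {K R : Type*} [Field K] [Fintype K] [CommRing R] [IsDomain R]

lemma card_filter_pow_orderOf_eq (χ : MulChar K R) {b : K} (hb : b ≠ 0) :
    (#{a : K | a ^ orderOf χ = b} : R) = ∑ j ∈ range (orderOf χ), (χ ^ j) b := by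
  obtain ⟨ζ, hζ⟩ := exists_isPrimitiveRoot_orderOf χ
  have hroots : ({a : K | a ^ orderOf χ = b} : Finset K) = (nthRoots (orderOf χ) b).toFinset := by
    ext a
    simp [mem_nthRoots χ.orderOf_pos]
  have hgeom : ∑ j ∈ range (orderOf χ), (χ ^ j) b = ∑ j ∈ range (orderOf χ), χ b ^ j :=
    sum_congr rfl fun j _ => MulChar.pow_apply_coe χ j (Units.mk0 b hb)
  rw [hroots, Multiset.toFinset_card_of_nodup (hζ.nthRoots_nodup hb), hζ.card_nthRoots, hgeom]
  simp only [exists_pow_orderOf_eq_iff χ hb]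
  split_ifs with hχb
  · simp [hχb]
  · have hunity : χ b ^ orderOf χ = 1 := by
      rw [← map_pow]
      exact (exists_pow_orderOf_eq_iff χ (pow_ne_zero _ hb)).1 ⟨b, rfl⟩
    have := geom_sum_mul (χ b) (orderOf χ)
    rw [hunity, sub_self, mul_eq_zero] at this
    rw [this.resolve_right (sub_ne_zero.2 hχb), Nat.cast_zero]

lemma sum_comp_pow_orderOf (χ : MulChar K R) {F : K → R} (hF : F 0 = 0) :
    ∑ a, F (a ^ orderOf χ) = ∑ j ∈ range (orderOf χ), ∑ b, (χ ^ j) b * F b := by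
  have hfiber (b : K) : ∑ a with a ^ orderOf χ = b, F (a ^ orderOf χ) =
      ∑ j ∈ range (orderOf χ), (χ ^ j) b * F b := by
    rw [sum_congr rfl fun a ha => by rw [(mem_filter.1 ha).2], sum_const, nsmul_eq_mul, ← sum_mul]
    by_cases hb : b = 0
    · simp [hb, hF]
    · rw [card_filter_pow_orderOf_eq χ hb]
  rw [← sum_fiberwise univ (fun a => a ^ orderOf χ), sum_comm]
  exact sum_congr rfl fun b _ => hfiber b

end PowerSubstitution

section Lift

variable {K R : Type*} (L : Type*) [Field K] [Field L] [Algebra K L] [CommRing R]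

/-- The additive character `e ∘ trace` of an extension `L` of `K`. -/
noncomputable def traceLift (e : AddChar K R) : AddChar L R :=
  e.compAddMonoidHom (Algebra.trace K L).toAddMonoidHom

lemma traceLift_apply (e : AddChar K R) (a : L) : traceLift L e a = e (Algebra.trace K L a) := rfl

variable [Finite L]

/-- The multiplicative character `χ ∘ norm` of an extension `L` of `K`. -/
noncomputable def normLift (χ : MulChar K R) : MulChar L R where
  toMonoidHom := χ.toMonoidHom.comp (Algebra.norm K)
  map_nonunit' a ha := by
    obtain rfl : a = 0 := by simpa using ha
    change χ (Algebra.norm K (0 : L)) = 0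
    rw [Algebra.norm_zero, χ.map_zero]

lemma normLift_apply (χ : MulChar K R) (a : L) : normLift L χ a = χ (Algebra.norm K a) := rfl

lemma normLift_pow (χ : MulChar K R) (n : ℕ) : normLift L (χ ^ n) = normLift L χ ^ n := by
  ext a
  have ha : IsUnit (Algebra.norm K (a : L)) := a.isUnit.map _
  rw [normLift_apply, MulChar.pow_apply_coe, normLift_apply, ← ha.unit_spec, MulChar.pow_apply_coe]

lemma normLift_mul (χ η : MulChar K R) : normLift L (χ * η) = normLift L χ * normLift L η := by
  ext a
  rfl

lemma normLift_eq_one_iff {χ : MulChar K R} : normLift L χ = 1 ↔ χ = 1 := by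
  constructor
  · intro h
    ext a
    obtain ⟨b, hb⟩ := FiniteField.norm_surjective K L a
    have hb0 : IsUnit b := by
      rw [isUnit_iff_ne_zero]
      rintro rfl
      exact a.ne_zero (by rw [← hb, Algebra.norm_zero])
    rw [MulChar.one_apply_coe, ← hb, ← normLift_apply, h, MulChar.one_apply hb0]
  · rintro rfl
    ext a
    rw [normLift_apply, MulChar.one_apply (a.isUnit.map _), MulChar.one_apply_coe]

lemma orderOf_normLift (χ : MulChar K R) : orderOf (normLift L χ) = orderOf χ :=
  orderOf_eq_orderOf_iff.2 fun n => by rw [← normLift_pow, normLift_eq_one_iff]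

end Lift

section Newton

variable {σ R : Type*} [Fintype σ] [CommRing R] [IsDomain R] [CharZero R]

lemma eq_aeval_esymm_of_newton (x : σ → R) {A : ℕ → R} (hA0 : A 0 = 1)
    (hA : ∀ n : ℕ, (n : R) * A n =
      ∑ k ∈ range n, ((-1) ^ k * ∑ i, x i ^ (k + 1)) * A (n - (k + 1))) (n : ℕ) :
    A n = MvPolynomial.aeval x (MvPolynomial.esymm σ R n) := by
  induction n using Nat.strong_induction_on with
  | _ n ih =>
  rcases Nat.eq_zero_or_pos n with rfl | hn
  · simp [hA0]
  refine mul_left_cancel₀ (Nat.cast_ne_zero.2 hn.ne' : (n : R) ≠ 0) ?_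
  have hnewton := congrArg (MvPolynomial.aeval x) (MvPolynomial.mul_esymm_eq_sum σ R n)
  simp only [map_mul, map_natCast, map_pow, map_neg, map_one, map_sum] at hnewton
  rw [hA, hnewton, mul_sum]
  refine sum_bij (fun k _ => (n - (k + 1), k + 1)) (fun k hk => ?_) (fun k _ l _ hkl => ?_)
    (fun a ha => ?_) fun k hk => ?_
  · rw [mem_range] at hk
    rw [mem_filter, HasAntidiagonal.mem_antidiagonal]
    omega
  · simpa using congrArg Prod.snd hkl
  · rw [mem_filter, HasAntidiagonal.mem_antidiagonal] at ha
    refine ⟨a.2 - 1, mem_range.2 (by omega), Prod.ext ?_ ?_⟩ <;> dsimp only <;> omega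
  · rw [mem_range] at hk
    have hsign : (-1 : R) ^ (n + 1) * (-1) ^ (n - (k + 1)) = (-1) ^ k := by
      rw [← pow_add, show n + 1 + (n - (k + 1)) = k + 2 * (n - k) by omega, pow_add, pow_mul]
      simp
    rw [ih _ (by omega), MvPolynomial.psum, map_sum, ← hsign]
    simp only [map_pow, MvPolynomial.aeval_X]
    ring

end Newton

section GaussSumProduct

variable {K R : Type*} [Field K] [CommRing R] (χ η : MulChar K R) (e : AddChar K R)

/-- The completely multiplicative weight on monic polynomials whose value at the characteristic
polynomial of `α` is `η (norm (α ^ n)) * e (trace (α ^ n))`. -/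
noncomputable def powerWeight (n : ℕ) (f : K[X]) : R := η (rootProduct f ^ n) * e (powerSum n f)

lemma powerWeight_mul (n : ℕ) {f g : K[X]} (hf : f.Monic) (hg : g.Monic) :
    powerWeight η e n (f * g) = powerWeight η e n f * powerWeight η e n g := by
  simp only [powerWeight, rootProduct_mul hf hg, powerSum_mul n hf hg, mul_pow, map_mul,
    AddChar.map_add_eq_mul]
  ring

lemma powerWeight_fieldCharpoly {L : Type*} [Field L] [Algebra K L] [Finite L] [IsGalois K L]
    {n : ℕ} (hn : n ≠ 0) (α : L) :
    powerWeight η e n (fieldCharpoly K α) = normLift L η (α ^ n) * traceLift L e (α ^ n) := by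
  rw [powerWeight, rootProduct_fieldCharpoly, powerSum_fieldCharpoly hn, normLift_apply,
    traceLift_apply, ← map_pow]

variable [Fintype K]

lemma sum_powerWeight_zero (n : ℕ) : ∑ f ∈ monicsOfDegree K 0, powerWeight η e n f = 1 := by
  rw [monicsOfDegree, sum_singleton]
  simp only [powerWeight, rootProduct, powerSum, powerSumSeries, ← C_1, natDegree_C, reverse_C]
  simp

lemma sum_powerWeight_succ (m : ℕ) :
    ∑ f ∈ monicsOfDegree K (m + 1), powerWeight η e (m + 1) f =
      (∑ g ∈ monicsOfDegree K m, e (powerSum (m + 1) (g * X))) *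
        ∑ t, η (t ^ (m + 1)) * e ((-1) ^ m * (m + 1) * t) := by
  rw [sum_monicsOfDegree_succ, sum_mul]
  refine sum_congr rfl fun g hg => ?_
  obtain ⟨hgm, hgdeg⟩ := mem_monicsOfDegree.1 hg
  have hdeg : (g * X).natDegree = m + 1 := by rw [natDegree_mul_X hgm.ne_zero, hgdeg]
  have hshift (c : K) := powerSum_add_C (hgm.mul monic_X) (by omega) c
  rw [hdeg] at hshift
  have hunit : ((-1 : K) ^ (m + 1)) ≠ 0 := by simp
  rw [mul_sum, ← Equiv.sum_comp (Equiv.mulLeft₀ _ hunit)]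
  refine sum_congr rfl fun t _ => ?_
  have hroot : rootProduct (g * X + C ((-1) ^ (m + 1) * t)) = t := by
    rw [rootProduct, natDegree_add_C, hdeg, coeff_add, mul_coeff_zero, coeff_X_zero, coeff_C_zero,
      mul_zero, zero_add, ← mul_assoc, ← mul_pow]
    simp
  rw [Equiv.mulLeft₀_apply, powerWeight, hroot, hshift, sub_eq_add_neg, AddChar.map_add_eq_mul,
    mul_left_comm]
  congr 4
  push_cast
  ring

variable [IsDomain R] {e}

lemma sum_one_pow_mul_apply (he : e ≠ 1) {n : ℕ} (hn : orderOf χ = n + 1) :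
    ∑ t, (1 : MulChar K R) (t ^ (n + 1)) * e ((-1) ^ n * (n + 1) * t) = -1 := by
  obtain ⟨ζ, hζ⟩ := exists_isPrimitiveRoot_orderOf χ
  rw [hn] at hζ
  have hc : (-1 : K) ^ n * (n + 1) ≠ 0 := by
    have := hζ.neZero'.out
    push_cast at this
    exact mul_ne_zero (by simp) this
  rw [← gaussSum_one_left (AddChar.IsPrimitive.of_ne_one he hc), gaussSum]
  refine sum_congr rfl fun t _ => ?_
  rw [map_pow, ← MulChar.pow_apply' _ n.succ_ne_zero, one_pow, AddChar.mulShift_apply]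

section ExtensionTower

variable (E : ℕ → Type*) [∀ k, Field (E k)] [∀ k, Fintype (E k)] [∀ k, Algebra K (E k)]
  (hE : ∀ k, Module.finrank K (E k) = k + 1)
include hE

/-- The Hasse–Davenport lifting relation. -/
theorem gaussSum_normLift_traceLift (he : e ≠ 1) (k : ℕ) :
    gaussSum (normLift (E k) χ) (traceLift (E k) e) = (-1) ^ k * gaussSum χ e ^ (k + 1) := by
  have hnewton (n : ℕ) := natCast_mul_sum_monicsOfDegree E hE
    (fun f g hf hg => gaussWeight_mul χ e (f := f) (g := g) hf hg) n
  have hlift (j : ℕ) : ∑ α : E j, gaussWeight χ e (fieldCharpoly K α) =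
      gaussSum (normLift (E j) χ) (traceLift (E j) e) :=
    sum_congr rfl fun α _ => gaussWeight_fieldCharpoly χ e α
  simp_rw [hlift] at hnewton
  induction k with
  | zero =>
    simpa only [range_one, sum_singleton, Nat.cast_one, one_mul, Nat.sub_self, pow_zero, pow_one,
      zero_add, sum_gaussWeight_zero, sum_gaussWeight_one, mul_one] using (hnewton 1).symm
  | succ k ih =>
    have hrest : ∑ j ∈ range k, gaussSum (normLift (E j) χ) (traceLift (E j) e) *
          ∑ f ∈ monicsOfDegree K (k + 2 - (j + 1)), gaussWeight χ e f = 0 :=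
      sum_eq_zero fun j hj => by
        rw [mem_range] at hj
        rw [show k + 2 - (j + 1) = k - j - 1 + 2 by omega, sum_gaussWeight_add_two χ he, mul_zero]
    have h := hnewton (k + 2)
    rw [sum_gaussWeight_add_two χ he, sum_range_succ, sum_range_succ, hrest, ih,
      show k + 2 - (k + 1) = 1 by omega, Nat.sub_self, sum_gaussWeight_zero,
      sum_gaussWeight_one] at h
    linear_combination -h

lemma sum_powerWeight_fieldCharpoly (he : e ≠ 1) (k : ℕ) :
    ∑ α : E k, powerWeight η e (orderOf χ) (fieldCharpoly K α) =
      (-1) ^ k * ∑ j ∈ range (orderOf χ), gaussSum (χ ^ j * η) e ^ (k + 1) := by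
  have hpow := sum_comp_pow_orderOf (normLift (E k) χ)
    (F := fun b => normLift (E k) η b * traceLift (E k) e b)
    (by simp only [MulChar.map_zero, zero_mul])
  rw [orderOf_normLift] at hpow
  simp_rw [powerWeight_fieldCharpoly η e χ.orderOf_pos.ne', hpow, mul_sum]
  refine sum_congr rfl fun j _ => ?_
  rw [← gaussSum_normLift_traceLift (χ ^ j * η) E hE he, gaussSum, normLift_mul, normLift_pow]
  exact sum_congr rfl fun b _ => by rw [MulChar.mul_apply, mul_assoc]

end ExtensionTower

lemma sum_powerWeight_orderOf [CharZero R] (he : e ≠ 1) :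
    ∑ f ∈ monicsOfDegree K (orderOf χ), powerWeight η e (orderOf χ) f =
      ∏ j ∈ range (orderOf χ), gaussSum (χ ^ j * η) e := by
  obtain ⟨p, _⟩ := CharP.exists K
  have : Fact p.Prime := ⟨CharP.char_is_prime K p⟩
  let E (k : ℕ) := FiniteField.Extension K p (k + 1)
  have hE (k : ℕ) : Module.finrank K (E k) = k + 1 := FiniteField.finrank_extension K p (k + 1)
  have (k : ℕ) : Fintype (E k) := Fintype.ofFinite _
  have hpsum (k : ℕ) : ∑ α : E k, powerWeight η e (orderOf χ) (fieldCharpoly K α) =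
      (-1) ^ k * ∑ j : Fin (orderOf χ), gaussSum (χ ^ (j : ℕ) * η) e ^ (k + 1) := by
    rw [sum_powerWeight_fieldCharpoly χ η E hE he,
      Fin.sum_univ_eq_sum_range (fun j => gaussSum (χ ^ j * η) e ^ (k + 1))]
  have hesymm := eq_aeval_esymm_of_newton
    (fun j : Fin (orderOf χ) => gaussSum (χ ^ (j : ℕ) * η) e)
    (A := fun n => ∑ f ∈ monicsOfDegree K n, powerWeight η e (orderOf χ) f)
    (sum_powerWeight_zero η e _) (fun n => by
      simp_rw [← hpsum]
      exact natCast_mul_sum_monicsOfDegree E hE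
        (fun f g hf hg => powerWeight_mul η e (orderOf χ) hf hg) n) (orderOf χ)
  have hcard : powersetCard (orderOf χ) (univ : Finset (Fin (orderOf χ))) = {univ} := by
    simpa using powersetCard_self (univ : Finset (Fin (orderOf χ)))
  rw [hesymm, MvPolynomial.esymm, hcard, sum_singleton, map_prod]
  simp only [MvPolynomial.aeval_X]
  exact Fin.prod_univ_eq_prod_range (fun j => gaussSum (χ ^ j * η) e) (orderOf χ)

/-- The Hasse–Davenport product formula. The sum over `t` stands for the Gauss sum of
`η ^ (n + 1)`, with a value that is also right when `η ^ (n + 1) = 1`. -/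
theorem prod_gaussSum_pow_mul [CharZero R] (he : e ≠ 1) {n : ℕ} (hn : orderOf χ = n + 1) :
    ∏ j ∈ range (n + 1), gaussSum (χ ^ j * η) e =
      (∏ j ∈ range n, gaussSum (χ ^ (j + 1)) e) *
        ∑ t, η (t ^ (n + 1)) * e ((-1) ^ n * (n + 1) * t) := by
  have hdirect (θ : MulChar K R) := sum_powerWeight_orderOf χ θ he
  simp_rw [hn, sum_powerWeight_succ] at hdirect
  have htriv := hdirect 1
  rw [sum_one_pow_mul_apply χ he hn, prod_range_succ'] at htriv
  simp only [mul_one, pow_zero, gaussSum_one_left he, mul_neg, neg_inj] at htriv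
  rw [← hdirect, htriv]

end GaussSumProduct

section MulCharExpect

variable {F R : Type*} [Field F] [Fintype F] [Field R]

noncomputable instance : Fintype (MulChar F R) := .ofFinite _

lemma sum_eq_zero_add_sum_units {M : Type*} [AddCommMonoid M] (f : F → M) :
    ∑ a, f a = f 0 + ∑ a : Fˣ, f a := by
  rw [Fintype.sum_eq_add_sum_subtype_ne f 0]
  exact congrArg _ (Fintype.sum_equiv unitsEquivNeZero _ _ fun _ => rfl).symm

lemma sum_mulChar_apply (χ : MulChar F R) :
    ∑ a, χ a = if χ = 1 then (Fintype.card F : R) - 1 else 0 := by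
  split_ifs with h
  · rw [h, MulChar.sum_one_eq_card_units, Fintype.card_units, Nat.cast_pred Fintype.card_pos]
  · exact MulChar.sum_eq_zero_of_ne_one h

lemma sum_units_mulChar_apply (χ : MulChar F R) :
    ∑ a : Fˣ, χ a = if χ = 1 then (Fintype.card F : R) - 1 else 0 := by
  rw [← sum_mulChar_apply, sum_eq_zero_add_sum_units (F := F), χ.map_zero, zero_add]

lemma gaussSum_mul_gaussSum_inv (χ : MulChar F R) {e : AddChar F R} (he : e ≠ 1) :
    gaussSum χ e * gaussSum χ⁻¹ e =
      Fintype.card F * χ (-1) - if χ = 1 then (Fintype.card F : R) - 1 else 0 := by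
  split_ifs with h
  · simp [h, gaussSum_one_left he, MulChar.one_apply]
  · rw [← mul_gaussSum_inv_eq_gaussSum χ⁻¹ e, mul_left_comm,
      gaussSum_mul_gaussSum_eq_card h (AddChar.IsPrimitive.of_ne_one he), MulChar.inv_apply',
      inv_neg_one]
    ring

variable [CharZero R] [HasEnoughRootsOfUnity R (Monoid.exponent Fˣ)]

lemma expect_mulChar_apply (a : F) : 𝔼 χ : MulChar F R, χ a = if a = 1 then 1 else 0 := by
  split_ifs with ha
  · simp [ha]
  · obtain ⟨χ, hχ⟩ := MulChar.exists_apply_ne_one_of_hasEnoughRootsOfUnity F R ha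
    refine eq_zero_of_mul_eq_self_left hχ ?_
    simp only [mul_expect, ← MulChar.mul_apply]
    exact Fintype.expect_bijective _ (Group.mulLeft_bijective χ) _ _ fun _ ↦ rfl

/-- Mellin inversion. -/
lemma expect_inv_mul_sum_mulChar (f : F → R) {a : F} (ha : a ≠ 0) :
    𝔼 χ : MulChar F R, χ⁻¹ a * ∑ b, χ b * f b = f a := by
  calc 𝔼 χ : MulChar F R, χ⁻¹ a * ∑ b, χ b * f b
      = ∑ b, (𝔼 χ : MulChar F R, χ (a⁻¹ * b)) * f b := by
        simp only [mul_sum, expect_sum_comm, expect_mul, map_mul, MulChar.inv_apply', mul_assoc]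
    _ = f a := by
        simp only [expect_mulChar_apply, inv_mul_eq_one₀ ha, ite_mul, one_mul, zero_mul,
          sum_ite_eq, mem_univ, if_true]

end MulCharExpect

section HypergeometricSum

variable {F R : Type*} [Field F] [Fintype F] [Field R]

/-- The finite-field analogue of Euler's integral for `₂F₁`, with parameter `l`. -/
noncomputable def hypergeometricSum (l : F) (α β γ : MulChar F R) : R :=
  ∑ x, α x * β (1 - x) * γ (1 - l * x)

lemma gaussSum_mulShift_of_ne_one {χ : MulChar F R} (hχ : χ ≠ 1) (e : AddChar F R) (a : F) :
    gaussSum χ (e.mulShift a) = χ⁻¹ a * gaussSum χ e := by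
  obtain rfl | ha := eq_or_ne a 0
  · rw [AddChar.mulShift_zero, gaussSum_one_right hχ, MulChar.map_zero, zero_mul]
  · exact gaussSum_mulShift_eq χ e (Units.mk0 a ha)

lemma gaussSum_mul_gaussSum_inv_eq_sum {β γ : MulChar F R} (h : β ≠ γ) (η : MulChar F R)
    (e : AddChar F R) :
    gaussSum (β * η) e * gaussSum (γ * η)⁻¹ e =
      gaussSum (β * γ⁻¹) e * ∑ t, η t * (β t * (β⁻¹ * γ) (1 + t)) := by
  have hβγ : β * γ⁻¹ ≠ 1 := by rwa [ne_eq, mul_inv_eq_one]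
  have hscale (y : F) : (∑ x, (β * η) x * e x) * ((γ * η)⁻¹ y * e y) =
      ∑ t, (β * η) t * ((β * γ⁻¹) y * e ((1 + t) * y)) := by
    obtain rfl | hy := eq_or_ne y 0
    · simp only [MulChar.map_zero, zero_mul, mul_zero, sum_const_zero]
    · rw [← Equiv.sum_comp (Equiv.mulRight₀ y hy), sum_mul]
      refine sum_congr rfl fun t _ => ?_
      simp only [Equiv.mulRight₀_apply, MulChar.mul_apply, MulChar.inv_apply_eq_inv',
        map_mul, add_mul, one_mul, AddChar.map_add_eq_mul]
      have hη : η y ≠ 0 := (hy.isUnit.map η).ne_zero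
      field_simp
  calc gaussSum (β * η) e * gaussSum (γ * η)⁻¹ e
      = ∑ t, (β * η) t * gaussSum (β * γ⁻¹) (e.mulShift (1 + t)) := by
        simp only [gaussSum, mul_sum (f := fun y => (γ * η)⁻¹ y * e y), hscale,
          AddChar.mulShift_apply]
        rw [sum_comm]
        simp only [mul_sum]
    _ = gaussSum (β * γ⁻¹) e * ∑ t, η t * (β t * (β⁻¹ * γ) (1 + t)) := by
        simp only [gaussSum_mulShift_of_ne_one hβγ, mul_sum, mul_inv_rev, inv_inv, mul_comm γ,
          MulChar.mul_apply]
        exact sum_congr rfl fun t _ => by ring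

variable [CharZero R] [HasEnoughRootsOfUnity R (Monoid.exponent Fˣ)]

lemma expect_mul_sum_mul_sum {A : F → R} (hA : A 0 = 0) (B : F → R) {a : F} (ha : a ≠ 0) :
    𝔼 η : MulChar F R, η a * ((∑ t, η t * A t) * ∑ s, η s * B s) = ∑ t, A t * B (a * t)⁻¹ := by
  calc 𝔼 η : MulChar F R, η a * ((∑ t, η t * A t) * ∑ s, η s * B s)
      = ∑ t, A t * 𝔼 η : MulChar F R, η⁻¹ (a * t)⁻¹ * ∑ s, η s * B s := by
        simp only [mul_expect, ← expect_sum_comm, MulChar.inv_apply', inv_inv, map_mul]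
        refine expect_congr rfl fun η _ => ?_
        rw [sum_mul, mul_sum]
        exact sum_congr rfl fun t _ => by ring
    _ = ∑ t, A t * B (a * t)⁻¹ := by
        refine sum_congr rfl fun t _ => ?_
        obtain rfl | ht := eq_or_ne t 0
        · rw [hA, zero_mul, zero_mul]
        · rw [expect_inv_mul_sum_mulChar B (inv_ne_zero (mul_ne_zero ha ht))]

lemma expect_mul_gaussSum_eq_hypergeometricSum {β γ β' γ' : MulChar F R} (h : β ≠ γ)
    (h' : β' ≠ γ') (e : AddChar F R) {a : F} (ha : a ≠ 0) :
    𝔼 η : MulChar F R, η a * ((gaussSum (β * η) e * gaussSum (γ * η)⁻¹ e) *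
        (gaussSum (β' * η) e * gaussSum (γ' * η)⁻¹ e)) =
      gaussSum (β * γ⁻¹) e * gaussSum (β' * γ'⁻¹) e * (β⁻¹ a * (β * γ'⁻¹) (-1)) *
        hypergeometricSum a⁻¹ (β * γ'⁻¹) (β'⁻¹ * γ') (β⁻¹ * γ) := by
  have hterm (t : F) : β (-a⁻¹ * t) * (β⁻¹ * γ) (1 + -a⁻¹ * t) *
      (β' (a * (-a⁻¹ * t))⁻¹ * (β'⁻¹ * γ') (1 + (a * (-a⁻¹ * t))⁻¹)) =
      (β⁻¹ a * (β * γ'⁻¹) (-1)) *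
        ((β * γ'⁻¹) t * (β'⁻¹ * γ') (1 - t) * (β⁻¹ * γ) (1 - a⁻¹ * t)) := by
    obtain rfl | ht := eq_or_ne t 0
    · simp only [mul_zero, MulChar.map_zero, zero_mul]
    have hat : (a * (-a⁻¹ * t))⁻¹ = -1 * t⁻¹ := by field_simp
    have hsub : 1 + -1 * t⁻¹ = -1 * (1 - t) * t⁻¹ := by field_simp; ring
    have hβ't : β' t ≠ 0 := (ht.isUnit.map β').ne_zero
    have hβ'neg : β' (-1) ≠ 0 := (isUnit_one.neg.map β').ne_zero
    have hγ'neg : γ' (-1) = (γ' (-1))⁻¹ := by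
      rw [← MulChar.inv_apply_eq_inv', MulChar.inv_apply', inv_neg_one]
    rw [hat, hsub, show -a⁻¹ * t = -1 * a⁻¹ * t by ring,
      show 1 + -1 * a⁻¹ * t = 1 - a⁻¹ * t by ring]
    simp only [← MulChar.inv_apply', MulChar.mul_apply, MulChar.inv_apply_eq_inv', map_mul,
      ← hγ'neg]
    field_simp
  calc _ = gaussSum (β * γ⁻¹) e * gaussSum (β' * γ'⁻¹) e *
        𝔼 η : MulChar F R, η a * ((∑ t, η t * (β t * (β⁻¹ * γ) (1 + t))) *
          ∑ t, η t * (β' t * (β'⁻¹ * γ') (1 + t))) := by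
        simp only [gaussSum_mul_gaussSum_inv_eq_sum h, gaussSum_mul_gaussSum_inv_eq_sum h',
          mul_expect]
        exact expect_congr rfl fun η _ => by ring
    _ = _ := by
        rw [expect_mul_sum_mul_sum (by rw [MulChar.map_zero, zero_mul]) _ ha,
          ← Equiv.sum_comp (Equiv.mulLeft₀ (-a⁻¹) (neg_ne_zero.2 (inv_ne_zero ha))),
          mul_assoc _ (_ * _)]
        simp only [Equiv.mulLeft₀_apply, hterm, hypergeometricSum, mul_sum]

end HypergeometricSum

section CharacterFamily

variable {F R : Type*} [Field F] [Field R] {N : ℕ} (κ : AddChar (ZMod N) (MulChar F R))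

lemma family_one_pow (j : ℕ) : κ 1 ^ j = κ j := by
  rw [← AddChar.map_nsmul_eq_pow, nsmul_one]

lemma orderOf_family_one {κ : AddChar (ZMod N) (MulChar F R)} (hκ : Function.Injective κ) :
    orderOf (κ 1) = N :=
  (orderOf_injective κ.toMonoidHom hκ (.ofAdd 1)).trans (ZMod.addOrderOf_one N)

lemma sum_units_family_apply [Fintype F] {κ : AddChar (ZMod N) (MulChar F R)}
    (hκ : Function.Injective κ) (k : ZMod N) :
    ∑ v : Fˣ, κ k v = if k = 0 then (Fintype.card F : R) - 1 else 0 := by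
  rw [sum_units_mulChar_apply]
  simp only [← AddChar.map_zero_eq_one κ, hκ.eq_iff]

variable [NeZero N]

lemma family_apply_pow (b : ZMod N) {a : F} (ha : a ≠ 0) : κ b (a ^ N) = 1 := by
  rw [map_pow, ← MulChar.pow_apply' _ (NeZero.ne N), ← AddChar.map_nsmul_eq_pow,
    nsmul_eq_mul, CharP.cast_eq_zero, zero_mul, AddChar.map_zero_eq_one,
    MulChar.one_apply ha.isUnit]

lemma family_apply_neg_one (hN : Odd N) (b : ZMod N) : κ b (-1) = 1 := by
  rw [← hN.neg_one_pow, family_apply_pow κ b (neg_ne_zero.2 one_ne_zero)]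

@[to_additive]
lemma prod_range_natCast_zmod {M : Type*} [CommMonoid M] (f : ZMod N → M) :
    ∏ j ∈ range N, f j = ∏ b, f b := by
  obtain ⟨n, rfl⟩ := Nat.exists_eq_succ_of_ne_zero (NeZero.ne N)
  rw [← Fin.prod_univ_eq_prod_range (fun j => f j)]
  exact prod_congr rfl fun b _ => congrArg f (Fin.cast_val_eq_self b)

variable {κ} (hκ : Function.Injective κ)
include hκ

variable [Fintype F]

lemma card_filter_pow_eq_sum_family {b : F} (hb : b ≠ 0) :
    (#{a : F | a ^ N = b} : R) = ∑ j, κ j b := by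
  have h := card_filter_pow_orderOf_eq (κ 1) hb
  rw [orderOf_family_one hκ] at h
  simp only [h, family_one_pow, sum_range_natCast_zmod fun j => κ j b]

lemma prod_gaussSum_family_mul_inv (hN : Odd N) {e : AddChar F R} (he : e ≠ 1)
    (s : Finset (ZMod N)) (η : MulChar F R) :
    ∏ b ∈ s, gaussSum (κ b * η) e * gaussSum (κ b * η)⁻¹ e =
      (Fintype.card F : R) ^ #s * η ((-1) ^ #s) -
        ∑ b ∈ s, if η = κ (-b) then
          ((Fintype.card F : R) - 1) * (Fintype.card F : R) ^ (#s - 1) else 0 := by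
  have hone (b : ZMod N) : κ b * η = 1 ↔ η = κ (-b) := by
    rw [AddChar.map_neg_eq_inv, eq_inv_iff_mul_eq_one, mul_comm]
  simp only [gaussSum_mul_gaussSum_inv _ he, MulChar.mul_apply, family_apply_neg_one κ hN,
    one_mul, hone]
  by_cases hη : ∃ b ∈ s, η = κ (-b)
  · obtain ⟨b, hb, rfl⟩ := hη
    have heq (c : ZMod N) : κ (-b) = κ (-c) ↔ b = c := hκ.eq_iff.trans neg_inj
    have herase : ∏ c ∈ s.erase b, ((Fintype.card F : R) - if b = c then
        (Fintype.card F : R) - 1 else 0) = (Fintype.card F : R) ^ (#s - 1) := by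
      rw [← card_erase_of_mem hb, ← prod_const]
      exact prod_congr rfl fun c hc => by rw [if_neg (ne_of_mem_erase hc).symm, sub_zero]
    simp only [heq, family_apply_neg_one κ hN, map_pow, one_pow, mul_one]
    rw [← mul_prod_erase s _ hb, herase, if_pos rfl, sum_ite_eq, if_pos hb,
      ← mul_pow_sub_one (card_ne_zero_of_mem hb)]
    ring
  · push Not at hη
    rw [sum_eq_zero fun b hb => if_neg (hη b hb), sub_zero, map_pow, ← mul_pow, ← prod_const]
    exact prod_congr rfl fun b hb => by rw [if_neg (hη b hb), sub_zero]

end CharacterFamily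

section DworkMean

variable {F R : Type*} [Field F] [Fintype F] [Field R]

/-- The functions `η ↦ gaussSum (κ b * η) e`, indexed by `b`. -/
noncomputable def gaussFamily {N : ℕ} (κ : AddChar (ZMod N) (MulChar F R)) (e : AddChar F R)
    (b : ZMod N) (η : MulChar F R) : R :=
  gaussSum (κ b * η) e

variable [CharZero R]

/-- The linear functional through which the Dwork hypersurface `∑ xᵢ ^ N = N ψ ∏ xᵢ` enters its
point count: averaging over characters against the Mellin transform of the variable `t = ∏ xᵢ`. -/
noncomputable def dworkMean (N : ℕ) (ψ : F) (e : AddChar F R) : (MulChar F R → R) →ₗ[R] R where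
  toFun w := 𝔼 η : MulChar F R,
    η ((-ψ) ^ N) * (∑ t, η⁻¹ (t ^ N) * e ((-1) ^ (N + 1) * N * t)) * w η
  map_add' v w := by simp only [Pi.add_apply, mul_add, expect_add_distrib]
  map_smul' c w := by
    simp only [Pi.smul_apply, smul_eq_mul, RingHom.id_apply, mul_expect, mul_left_comm _ c]

variable {N : ℕ} [NeZero N] (κ : AddChar (ZMod N) (MulChar F R)) {ψ : F} (e : AddChar F R)

lemma dworkMean_comp_mul_left (hψ : ψ ≠ 0) (c : ZMod N) (w : MulChar F R → R) :
    dworkMean N ψ e (fun η => w (κ c * η)) = dworkMean N ψ e w := by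
  refine Fintype.expect_bijective (κ c * ·) (Group.mulLeft_bijective _) _ _ fun η => ?_
  have hinv (t : F) : (κ c * η)⁻¹ (t ^ N) = η⁻¹ (t ^ N) := by
    obtain rfl | ht := eq_or_ne t 0
    · simp only [zero_pow (NeZero.ne N), MulChar.map_zero]
    · rw [mul_inv, MulChar.mul_apply, ← AddChar.map_neg_eq_inv, family_apply_pow κ _ ht, one_mul]
  simp only [hinv, MulChar.mul_apply, family_apply_pow κ c (neg_ne_zero.2 hψ), one_mul]

lemma dworkMean_prod_gaussFamily_add (hψ : ψ ≠ 0) (c : ZMod N) {ι : Type*} (s : Finset ι)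
    (b : ι → ZMod N) :
    dworkMean N ψ e (∏ i ∈ s, gaussFamily κ e (b i + c)) =
      dworkMean N ψ e (∏ i ∈ s, gaussFamily κ e (b i)) := by
  refine (congrArg _ ?_).trans (dworkMean_comp_mul_left κ e hψ c _)
  ext η
  simp only [prod_apply, gaussFamily, AddChar.map_add_eq_mul, mul_assoc]

variable {κ} (hκ : Function.Injective κ) {e} (he : e ≠ 1)
include hκ he

/-- The Hasse–Davenport product formula in terms of `dworkMean`. -/
lemma prod_gaussSum_mul_dworkMean (w : MulChar F R → R) :
    (∏ j ∈ range (N - 1), gaussSum (κ (j + 1)) e) * dworkMean N ψ e w =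
      𝔼 η : MulChar F R, η ((-ψ) ^ N) * (∏ b, gaussSum (κ b * η)⁻¹ e) * w η := by
  obtain ⟨n, rfl⟩ := Nat.exists_eq_succ_of_ne_zero (NeZero.ne N)
  have hHD (η : MulChar F R) : ∏ b, gaussSum (κ b * η)⁻¹ e =
      (∏ j ∈ range n, gaussSum (κ (j + 1)) e) *
        ∑ t, η⁻¹ (t ^ (n + 1)) * e ((-1) ^ n * (n + 1) * t) := by
    have h := prod_gaussSum_pow_mul (κ 1) η⁻¹ he (orderOf_family_one hκ)
    simp only [family_one_pow, prod_range_natCast_zmod fun b => gaussSum (κ b * η⁻¹) e,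
      Nat.cast_add_one] at h
    rw [← h, ← Equiv.prod_comp (Equiv.neg _)]
    simp only [Equiv.neg_apply, AddChar.map_neg_eq_inv, mul_inv, inv_inv]
  simp only [hHD, dworkMean, LinearMap.coe_mk, AddHom.coe_mk, mul_expect, Nat.succ_eq_add_one,
    Nat.add_sub_cancel, Nat.cast_add_one, pow_add (-1 : F), pow_one, mul_neg, mul_one, neg_neg]
  exact expect_congr rfl fun η _ => by ring

variable [HasEnoughRootsOfUnity R (Monoid.exponent Fˣ)]

/-- Conjugate Gauss sums cancel in pairs, up to the contribution of the finitely many characters at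
which one of the Gauss sums is trivial. -/
lemma prod_gaussSum_mul_dworkMean_prod_mul (hN : Odd N) (hψ : ψ ≠ 0) {s : Finset (ZMod N)}
    (hs : Odd #s) (w : MulChar F R → R) :
    (∏ j ∈ range (N - 1), gaussSum (κ (j + 1)) e) *
        dworkMean N ψ e ((∏ b ∈ s, gaussFamily κ e b) * w) =
      (Fintype.card F : R) ^ #s *
          (𝔼 η : MulChar F R, η (ψ ^ N) * ((∏ b ∈ sᶜ, gaussSum (κ b * η)⁻¹ e) * w η)) -
        (Fintype.card F : R) ^ (#s - 1) *
          ∑ b ∈ s, (∏ c ∈ sᶜ, gaussSum (κ (c - b))⁻¹ e) * w (κ (-b)) := by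
  have hsign (η : MulChar F R) : η ((-ψ) ^ N) * η ((-1) ^ #s) = η (ψ ^ N) := by
    rw [← map_mul, hN.neg_pow, hs.neg_one_pow, mul_neg_one, neg_neg]
  have hpole (b : ZMod N) (X : MulChar F R → R) (r : R) :
      𝔼 η : MulChar F R, (if η = κ (-b) then ((Fintype.card F : R) - 1) * r else 0) * X η =
        r * X (κ (-b)) := by
    have hcard : (Fintype.card (MulChar F R) : R) = (Fintype.card F : R) - 1 := by
      rw [← Nat.card_eq_fintype_card, MulChar.card_eq_card_units_of_hasEnoughRootsOfUnity,
        Nat.card_eq_fintype_card, Fintype.card_units, Nat.cast_pred Fintype.card_pos]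
    have hcard0 : (Fintype.card (MulChar F R) : R) ≠ 0 := Nat.cast_ne_zero.2 Fintype.card_ne_zero
    simp only [Fintype.expect_eq_sum_div_card, ite_mul, zero_mul, sum_ite_eq', mem_univ, if_true,
      ← hcard]
    field_simp
  set W : MulChar F R → R := fun η => (∏ b ∈ sᶜ, gaussSum (κ b * η)⁻¹ e) * w η
  calc _ = 𝔼 η : MulChar F R, η ((-ψ) ^ N) *
        (∏ b ∈ s, gaussSum (κ b * η) e * gaussSum (κ b * η)⁻¹ e) * W η := by
        rw [prod_gaussSum_mul_dworkMean hκ he]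
        refine expect_congr rfl fun η _ => ?_
        rw [← prod_mul_prod_compl s, prod_mul_distrib]
        simp only [Pi.mul_apply, prod_apply, gaussFamily, W]
        ring
    _ = 𝔼 η : MulChar F R, ((Fintype.card F : R) ^ #s * (η (ψ ^ N) * W η) -
          ∑ b ∈ s, (if η = κ (-b) then ((Fintype.card F : R) - 1) * (Fintype.card F : R) ^ (#s - 1)
            else 0) * (η ((-ψ) ^ N) * W η)) := by
        refine expect_congr rfl fun η _ => ?_
        rw [prod_gaussSum_family_mul_inv hκ hN he, ← sum_mul, ← hsign]
        ring
    _ = _ := by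
        rw [expect_sub_distrib, ← mul_expect, expect_sum_comm]
        simp only [hpole, family_apply_pow κ _ (neg_ne_zero.2 hψ), one_mul, W, mul_sum]
        simp only [sub_eq_add_neg, AddChar.map_add_eq_mul]

end DworkMean

section ConvPow

variable {S : Type*} [CommSemiring S] {N : ℕ} [NeZero N]

/-- The coefficients of the `n`-th power of `A`, regarded as an element of the group algebra of
`ZMod N`. -/
def convPow (A : ZMod N → S) : ℕ → ZMod N → S
  | 0 => Pi.single 0 1
  | n + 1 => fun k => ∑ c, A c * convPow A n (k - c)

lemma convPow_single_zero (s : S) (n : ℕ) :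
    convPow (Pi.single 0 s : ZMod N → S) n = Pi.single 0 (s ^ n) := by
  induction n with
  | zero => simp only [convPow, pow_zero]
  | succ n ih =>
    ext k
    simp only [convPow, ih]
    rw [sum_eq_single 0 (fun c _ hc => by rw [Pi.single_eq_of_ne hc, zero_mul]) (by simp),
      sub_zero, Pi.single_eq_same, Pi.single_apply, Pi.single_apply, mul_ite, mul_zero, pow_succ']

variable {F R : Type*} [Field F] [Field R] [Algebra R S] (κ : AddChar (ZMod N) (MulChar F R))

lemma sum_family_smul_pow (A : ZMod N → S) (n : ℕ) (y : Fˣ) :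
    (∑ b, κ b y • A b) ^ n = ∑ k, κ k y • convPow A n k := by
  induction n with
  | zero =>
    simp only [pow_zero, convPow]
    rw [sum_eq_single 0 (fun k _ hk => by rw [Pi.single_eq_of_ne hk, smul_zero]) (by simp),
      Pi.single_eq_same, AddChar.map_zero_eq_one, MulChar.one_apply_coe, one_smul]
  | succ n ih =>
    simp only [pow_succ', ih, convPow, smul_sum, sum_mul_sum]
    rw [sum_comm (s := univ (α := ZMod N)) (t := univ) (f := fun k c => κ k y • _)]
    refine sum_congr rfl fun c _ => Fintype.sum_equiv (Equiv.addRight c) _ _ fun k => ?_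
    rw [Equiv.coe_addRight, add_sub_cancel_right, AddChar.map_add_eq_mul, MulChar.mul_apply,
      smul_mul_smul_comm, mul_comm]

variable {κ} [Fintype F]

lemma sum_units_sum_family_smul_pow (hκ : Function.Injective κ) (A : ZMod N → S) (n : ℕ) :
    ∑ y : Fˣ, (∑ b, κ b (y⁻¹ : Fˣ) • A b) ^ n = ((Fintype.card F : R) - 1) • convPow A n 0 := by
  rw [← Equiv.sum_comp (Equiv.inv Fˣ)]
  simp only [Equiv.inv_apply, inv_inv, sum_family_smul_pow]
  rw [sum_comm]
  simp only [← sum_smul, sum_units_family_apply hκ, ite_smul, zero_smul, sum_ite_eq', mem_univ,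
    if_true]

end ConvPow

section Counting

lemma addChar_apply_sum {A M : Type*} [AddCommMonoid A] [CommMonoid M] (e : AddChar A M)
    {ι : Type*} (s : Finset ι) (f : ι → A) : e (∑ i ∈ s, f i) = ∏ i ∈ s, e (f i) :=
  map_prod e.toMonoidHom (fun i => Multiplicative.ofAdd (f i)) s

variable {F : Type*} [Field F] [Fintype F]

lemma card_filter_eq_card_filter_prod_eq_zero_add {ι : Type*} [Fintype ι] [DecidableEq ι]
    (P : (ι → F) → Prop) :
    #{x : ι → F | P x} =
      #{x : ι → F | P x ∧ ∏ i, x i = 0} + #{u : ι → Fˣ | P fun i => u i} := by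
  rw [← card_filter_add_card_filter_not (s := {x : ι → F | P x}) (fun x => ∏ i, x i = 0),
    filter_filter, filter_filter]
  congr 1
  have hinj : Function.Injective fun (u : ι → Fˣ) i => (u i : F) := fun u v h =>
    funext fun i => Units.ext (congrFun h i)
  rw [← card_image_of_injective _ hinj]
  congr 1
  ext x
  simp only [mem_filter, mem_univ, true_and, mem_image, prod_eq_zero_iff, not_exists]
  refine ⟨fun ⟨hP, hx⟩ => ⟨fun i => Units.mk0 (x i) (hx i), hP, rfl⟩, ?_⟩
  rintro ⟨u, hu, rfl⟩
  exact ⟨hu, fun i => (u i).ne_zero⟩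

variable {R : Type*} [Field R] {e : AddChar F R}

lemma card_mul_card_filter_sum_eq_zero (he : e ≠ 1) {α : Type*} [Fintype α] (φ : α → F) (n : ℕ) :
    (Fintype.card F : R) * #{x : Fin n → α | ∑ i, φ (x i) = 0} =
      ∑ y, (∑ a, e (y * φ a)) ^ n := by
  simp only [Fintype.sum_pow, ← addChar_apply_sum, ← mul_sum]
  rw [sum_comm, natCast_card_filter, mul_sum]
  refine sum_congr rfl fun x _ => ?_
  rw [AddChar.sum_mulShift _ (AddChar.IsPrimitive.of_ne_one he), mul_ite, mul_one, mul_zero,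
    Nat.cast_ite, Nat.cast_zero]

end Counting

section FamilySum

variable {F R : Type*} [Field F] [Fintype F] [Field R] {N : ℕ} [NeZero N]

/-- The linear combination with coefficients `a` of the characters in the family `κ`, the weight
through which a change of variables such as `v = x ^ N` enters a character sum. -/
noncomputable def familySum (κ : AddChar (ZMod N) (MulChar F R)) (a : ZMod N → R) (v : F) : R :=
  ∑ b, a b * κ b v

lemma sum_units_familySum {κ : AddChar (ZMod N) (MulChar F R)} (hκ : Function.Injective κ)
    (a : ZMod N → R) : ∑ v : Fˣ, familySum κ a v = ((Fintype.card F : R) - 1) * a 0 := by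
  simp only [familySum]
  rw [sum_comm]
  simp only [← mul_sum, sum_units_family_apply hκ, mul_ite, mul_zero, sum_ite_eq', mem_univ,
    if_true, mul_comm (a 0)]

variable (κ : AddChar (ZMod N) (MulChar F R)) (a : ZMod N → R) (e : AddChar F R)

lemma sum_units_familySum_mul_addChar (η : MulChar F R) (y : Fˣ) :
    ∑ v : Fˣ, familySum κ a v * (η v * e (y * v)) =
      η⁻¹ y * (∑ b, κ b (y⁻¹ : Fˣ) • a b • gaussFamily κ e b) η := by
  have hgauss (b : ZMod N) : ∑ v : Fˣ, (κ b * η) v * e (y * v) =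
      η⁻¹ y * (κ b (y⁻¹ : Fˣ) * gaussSum (κ b * η) e) := by
    have h := gaussSum_mulShift_eq (κ b * η) e y
    rw [gaussSum, sum_eq_zero_add_sum_units (F := F), MulChar.map_zero, zero_mul, zero_add] at h
    simp only [AddChar.mulShift_apply] at h
    rw [h, mul_inv, MulChar.mul_apply, MulChar.inv_apply', Units.val_inv_eq_inv_val]
    ring
  simp only [familySum, sum_mul, Finset.sum_apply, Pi.smul_apply, smul_eq_mul, mul_sum, gaussFamily]
  rw [sum_comm]
  refine sum_congr rfl fun b _ => ?_
  rw [mul_left_comm _ (a b), mul_left_comm _ (a b), ← hgauss, mul_sum]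
  exact sum_congr rfl fun v _ => by rw [MulChar.mul_apply]; ring

lemma sum_units_pow_mul_addChar {ψ : F} (hψ : ψ ≠ 0) (η : MulChar F R) (y : Fˣ) :
    ∑ t : Fˣ, η⁻¹ ((t : F) ^ N) * e (-(y * N * ψ * t)) =
      η ((-ψ) ^ N) * η ((y : F) ^ N) * ∑ t, η⁻¹ (t ^ N) * e ((-1) ^ (N + 1) * N * t) := by
  have hc : (-1) ^ N * ψ * y ≠ 0 :=
    mul_ne_zero (mul_ne_zero (pow_ne_zero _ (neg_ne_zero.2 one_ne_zero)) hψ) y.ne_zero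
  have hcN : ((-1) ^ N * ψ * y) ^ N = (-ψ) ^ N * y ^ N := by
    rw [mul_pow, mul_pow, neg_pow ψ]
    rcases Nat.even_or_odd N with h | h <;> simp only [h.neg_one_pow, one_pow]
  have hη : η ((-ψ) ^ N) * η ((y : F) ^ N) * η⁻¹ (((-1) ^ N * ψ * y) ^ N) = 1 := by
    rw [← map_mul, ← hcN, MulChar.inv_apply_eq_inv',
      mul_inv_cancel₀ ((pow_ne_zero N hc).isUnit.map η).ne_zero]
  have harg (t : F) : (-1) ^ (N + 1) * N * ((-1) ^ N * ψ * y * t) = -(y * N * ψ * t) := by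
    have hsign : (-1 : F) ^ N * (-1) ^ N = 1 := pow_mul_pow_eq_one N (by norm_num)
    linear_combination -(y * N * ψ * t) * hsign
  symm
  calc _ = η ((-ψ) ^ N) * η ((y : F) ^ N) * ∑ t, η⁻¹ (((-1) ^ N * ψ * y * t) ^ N) *
        e ((-1) ^ (N + 1) * N * ((-1) ^ N * ψ * y * t)) :=
        congrArg _ (Equiv.sum_comp (Equiv.mulLeft₀ _ hc) _).symm
    _ = ∑ t, η⁻¹ (t ^ N) * e (-(y * N * ψ * t)) := by
        rw [mul_sum]
        refine sum_congr rfl fun t _ => ?_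
        rw [harg, mul_pow _ t, map_mul, ← mul_assoc, ← mul_assoc, hη, one_mul]
    _ = _ := by
        rw [sum_eq_zero_add_sum_units (F := F), zero_pow (NeZero.ne N), MulChar.map_zero, zero_mul,
          zero_add]

end FamilySum

section Torus

lemma sum_comp_eq_sum_card_mul {α β R : Type*} [Fintype α] [Fintype β] [CommSemiring R]
    (φ : α → β) (h : β → R) : ∑ x, h (φ x) = ∑ v, (#{a | φ a = v} : R) * h v := by
  rw [← sum_fiberwise univ φ]
  refine sum_congr rfl fun v _ => ?_
  rw [sum_congr rfl fun x hx => by rw [(mem_filter.1 hx).2], sum_const, nsmul_eq_mul]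

lemma sum_comp_eq_sum_prod_card_mul {ι α β R : Type*} [Fintype ι] [DecidableEq ι] [Fintype α]
    [Fintype β] [CommSemiring R] (φ : α → β) (h : (ι → β) → R) :
    ∑ x : ι → α, h (φ ∘ x) = ∑ v : ι → β, (∏ i, (#{a | φ a = v i} : R)) * h v := by
  rw [sum_comp_eq_sum_card_mul (φ ∘ ·) h]
  refine sum_congr rfl fun v _ => ?_
  rw [← Nat.cast_prod, ← Fintype.card_piFinset]
  congr 3
  ext x
  simp [Fintype.mem_piFinset, funext_iff]

variable {F R : Type*} [Field F] [Fintype F] [Field R] {n : ℕ}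

lemma card_mul_card_boundary {κ : AddChar (ZMod (n + 1)) (MulChar F R)}
    (hκ : Function.Injective κ) {e : AddChar F R} (he : e ≠ 1) {φ : F →*₀ F}
    {a : ZMod (n + 1) → R} (hφ : ∀ v : Fˣ, (#{z : Fˣ | φ z = v} : R) = familySum κ a v) :
    (Fintype.card F : R) * #{x : Fin (n + 1) → F | ∑ i, φ (x i) = 0 ∧ ∏ i, x i = 0} =
      (Fintype.card F : R) ^ (n + 1) - ((Fintype.card F : R) - 1) ^ (n + 1) +
        ((Fintype.card F : R) - 1) * ∑ k ∈ range (n + 1),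
          convPow (fun b => a b * gaussSum (κ b) e) k 0 * (n + 1).choose k := by
  set U : Fˣ → R := fun y => ∑ b, κ b (y⁻¹ : Fˣ) • (a b * gaussSum (κ b) e)
  have hU (y : Fˣ) : ∑ u : Fˣ, e (y * φ u) = U y := by
    have h := sum_comp_eq_sum_card_mul (Units.map (φ : F →* F)) fun v : Fˣ => e (y * v)
    have hone := sum_units_familySum_mul_addChar κ a e 1 y
    simp only [Units.ext_iff, Units.coe_map, MonoidHom.coe_coe, hφ] at h
    rw [h]
    simpa [gaussFamily, U, MulChar.one_apply_coe] using hone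
  have hF (y : F) : ∑ x, e (y * φ x) = 1 + ∑ u : Fˣ, e (y * φ u) := by
    rw [sum_eq_zero_add_sum_units (F := F), map_zero, mul_zero, AddChar.map_zero_eq_one]
  have hbinom (y : Fˣ) : (1 + U y) ^ (n + 1) - U y ^ (n + 1) =
      ∑ k ∈ range (n + 1), U y ^ k * (n + 1).choose k := by
    rw [add_comm, add_pow, sum_range_succ _ (n + 1)]
    simp
  have hsplit := card_filter_eq_card_filter_prod_eq_zero_add
    fun x : Fin (n + 1) → F => ∑ i, φ (x i) = 0
  calc _ = ∑ y, ((1 + ∑ u : Fˣ, e (y * φ u)) ^ (n + 1) - (∑ u : Fˣ, e (y * φ u)) ^ (n + 1)) := by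
        have hcast := (congrArg (Nat.cast : ℕ → R) hsplit).trans (Nat.cast_add _ _)
        rw [← sub_eq_iff_eq_add.2 hcast, mul_sub, card_mul_card_filter_sum_eq_zero he,
          card_mul_card_filter_sum_eq_zero he fun u : Fˣ => φ u, sum_sub_distrib]
        simp only [hF]
    _ = _ := by
        rw [sum_eq_zero_add_sum_units (F := F)]
        simp only [hU, hbinom, zero_mul, AddChar.map_zero_eq_one, sum_const, card_univ,
          Fintype.card_units, nsmul_eq_mul, Nat.cast_pred Fintype.card_pos, mul_one,
          add_sub_cancel]
        rw [sum_comm]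
        simp only [← sum_mul, U, sum_units_sum_family_smul_pow hκ]
        simp only [smul_eq_mul, mul_sum, mul_assoc]

variable [CharZero R] [HasEnoughRootsOfUnity R (Monoid.exponent Fˣ)]

lemma sum_torus_addChar (κ : AddChar (ZMod (n + 1)) (MulChar F R)) (a : ZMod (n + 1) → R)
    (e : AddChar F R) {ψ : F} (hψ : ψ ≠ 0) (y : Fˣ) :
    ∑ t : Fˣ, ∑ v : Fin n → Fˣ, (∏ i, familySum κ a (v i)) *
        e (y * (∑ i, (v i : F) + t ^ (n + 1) * (∏ i, (v i : F))⁻¹ - (n + 1 : ℕ) * ψ * t)) =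
      dworkMean (n + 1) ψ e
        (gaussFamily κ e 0 * (∑ b, κ b (y⁻¹ : Fˣ) • a b • gaussFamily κ e b) ^ n) := by
  have hmellin (t : Fˣ) (v : Fin n → Fˣ) : e (y * (t ^ (n + 1) * (∏ i, (v i : F))⁻¹)) =
      𝔼 η : MulChar F R, η⁻¹ y * η⁻¹ ((t : F) ^ (n + 1)) * (∏ i, η (v i)) * gaussSum η e := by
    have hne : (y : F) * (t ^ (n + 1) * (∏ i, (v i : F))⁻¹) ≠ 0 := by
      simp [prod_ne_zero_iff]
    rw [← expect_inv_mul_sum_mulChar e hne]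
    simp only [gaussSum, map_mul, ← MulChar.inv_apply' _ (∏ i, (v i : F)), inv_inv, map_prod,
      mul_assoc]
  calc _ = 𝔼 η : MulChar F R, η⁻¹ y * gaussSum η e *
        (∑ t : Fˣ, η⁻¹ ((t : F) ^ (n + 1)) * e (-(y * (n + 1 : ℕ) * ψ * t))) *
          (∑ v : Fˣ, familySum κ a v * (η v * e (y * v))) ^ n := by
        simp only [mul_add, sub_eq_add_neg, AddChar.map_add_eq_mul, hmellin, mul_sum _ _ (y : F),
          addChar_apply_sum, mul_expect, expect_mul, ← expect_sum_comm]
        refine expect_congr rfl fun η _ => ?_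
        rw [Fintype.sum_pow, mul_assoc, sum_mul_sum, mul_sum]
        refine sum_congr rfl fun t _ => ?_
        rw [mul_sum]
        refine sum_congr rfl fun v _ => ?_
        rw [prod_mul_distrib, prod_mul_distrib, mul_neg, ← mul_assoc (y : F), ← mul_assoc (y : F)]
        ring
    _ = _ := by
        refine expect_congr rfl fun η _ => ?_
        have hη : η⁻¹ y ^ (n + 1) * η ((y : F) ^ (n + 1)) = 1 := by
          rw [map_pow, ← mul_pow, MulChar.inv_apply_eq_inv',
            inv_mul_cancel₀ (y.isUnit.map η).ne_zero, one_pow]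
        rw [sum_units_familySum_mul_addChar, sum_units_pow_mul_addChar e hψ, Pi.mul_apply,
          Pi.pow_apply, gaussFamily, AddChar.map_zero_eq_one, one_mul, mul_pow]
        linear_combination (η ((-ψ) ^ (n + 1)) *
          (∑ t, η⁻¹ (t ^ (n + 1)) * e ((-1) ^ (n + 1 + 1) * (n + 1 : ℕ) * t)) * (gaussSum η e *
            (∑ b, κ b (y⁻¹ : Fˣ) • a b • gaussFamily κ e b) η ^ n)) * hη

lemma card_mul_card_torus {κ : AddChar (ZMod (n + 1)) (MulChar F R)} (hκ : Function.Injective κ)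
    {e : AddChar F R} (he : e ≠ 1) {ψ : F} (hψ : ψ ≠ 0) {φ : F →*₀ F} {a : ZMod (n + 1) → R}
    (hφ : ∀ v : Fˣ, (#{z : Fˣ | φ z = v} : R) = familySum κ a v) :
    (Fintype.card F : R) * #{p : Fˣ × (Fin n → Fˣ) | ∑ i, φ (p.2 i) +
        p.1 ^ (n + 1) * (∏ i, φ (p.2 i))⁻¹ = (n + 1 : ℕ) * ψ * p.1} =
      ((Fintype.card F : R) - 1) * ((((Fintype.card F : R) - 1) * a 0) ^ n +
        dworkMean (n + 1) ψ e
          (gaussFamily κ e 0 * convPow (fun b => a b • gaussFamily κ e b) n 0)) := by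
  have hpush (t : Fˣ) : ∑ z : Fin n → Fˣ, (if ∑ i, φ (z i) + t ^ (n + 1) * (∏ i, φ (z i))⁻¹ =
        (n + 1 : ℕ) * ψ * t then (Fintype.card F : R) else 0) =
      ∑ v : Fin n → Fˣ, (∏ i, familySum κ a (v i)) *
        ∑ y, e (y * (∑ i, (v i : F) + t ^ (n + 1) * (∏ i, (v i : F))⁻¹ - (n + 1 : ℕ) * ψ * t)) := by
    have h := sum_comp_eq_sum_prod_card_mul (Units.map (φ : F →* F)) fun v : Fin n → Fˣ =>
      ∑ y, e (y * (∑ i, (v i : F) + t ^ (n + 1) * (∏ i, (v i : F))⁻¹ - (n + 1 : ℕ) * ψ * t))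
    simp only [Units.ext_iff, Units.coe_map, MonoidHom.coe_coe, hφ] at h
    rw [← h]
    simp only [AddChar.sum_mulShift _ (AddChar.IsPrimitive.of_ne_one he), sub_eq_zero,
      Function.comp_apply, Units.coe_map, MonoidHom.coe_coe, Nat.cast_ite, Nat.cast_zero]
  calc _ = ∑ y, ∑ t : Fˣ, ∑ v : Fin n → Fˣ, (∏ i, familySum κ a (v i)) *
        e (y * (∑ i, (v i : F) + t ^ (n + 1) * (∏ i, (v i : F))⁻¹ - (n + 1 : ℕ) * ψ * t)) := by
        rw [natCast_card_filter, Fintype.sum_prod_type, mul_sum, sum_comm]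
        refine sum_congr rfl fun t _ => ?_
        rw [sum_comm]
        simp only [mul_sum, mul_ite, mul_one, mul_zero, hpush]
    _ = _ := by
        rw [sum_eq_zero_add_sum_units (F := F)]
        simp only [sum_torus_addChar κ a e hψ, zero_mul, AddChar.map_zero_eq_one, mul_one,
          ← Fintype.sum_pow fun v : Fˣ => familySum κ a v, sum_units_familySum hκ, sum_const,
          card_univ, Fintype.card_units, nsmul_eq_mul, Nat.cast_pred Fintype.card_pos]
        rw [← map_sum, ← mul_sum, sum_units_sum_family_smul_pow hκ, mul_smul_comm, map_smul,
          smul_eq_mul]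
        ring

lemma card_mul_card_filter_eq {κ : AddChar (ZMod (n + 1)) (MulChar F R)}
    (hκ : Function.Injective κ) {e : AddChar F R} (he : e ≠ 1) {ψ : F} (hψ : ψ ≠ 0)
    {φ : F →*₀ F} {a : ZMod (n + 1) → R}
    (hφ : ∀ v : Fˣ, (#{z : Fˣ | φ z = v} : R) = familySum κ a v) (ha : a 0 = 1)
    {P : (Fin (n + 1) → F) → Prop} (hboundary : ∀ x, ∏ i, x i = 0 → (P x ↔ ∑ i, φ (x i) = 0))
    (htorus : #{u : Fin (n + 1) → Fˣ | P fun i => u i} =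
      #{p : Fˣ × (Fin n → Fˣ) | ∑ i, φ (p.2 i) + p.1 ^ (n + 1) * (∏ i, φ (p.2 i))⁻¹ =
        (n + 1 : ℕ) * ψ * p.1}) :
    (Fintype.card F : R) * #{x | P x} = (Fintype.card F : R) ^ (n + 1) +
      ((Fintype.card F : R) - 1) *
        (∑ k ∈ range (n + 1), convPow (fun b => a b * gaussSum (κ b) e) k 0 * (n + 1).choose k +
          dworkMean (n + 1) ψ e
            (gaussFamily κ e 0 * convPow (fun b => a b • gaussFamily κ e b) n 0)) := by
  have hsame : #{x | P x ∧ ∏ i, x i = 0} =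
      #{x : Fin (n + 1) → F | ∑ i, φ (x i) = 0 ∧ ∏ i, x i = 0} :=
    congrArg card (filter_congr fun x _ => and_congr_left (hboundary x))
  rw [card_filter_eq_card_filter_prod_eq_zero_add P, htorus, hsame, Nat.cast_add, mul_add,
    card_mul_card_boundary hκ he hφ, card_mul_card_torus hκ he hψ hφ, ha]
  ring

end Torus

section Parametrization

variable {F : Type*} [Field F] [Fintype F] {n : ℕ}

lemma card_units_sum_pow_eq_mul_prod (N : ℕ) (c : F) :
    #{u : Fin (n + 1) → Fˣ | ∑ i, (u i : F) ^ N = c * ∏ i, (u i : F)} =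
      #{p : Fˣ × (Fin n → Fˣ) | ∑ i, (p.2 i : F) ^ N +
        p.1 ^ N * (∏ i, (p.2 i : F) ^ N)⁻¹ = c * p.1} := by
  refine (card_nbij' (fun p => Fin.cons (p.1 / ∏ i, p.2 i) p.2)
    (fun u => (∏ i, u i, Fin.tail u)) ?_ ?_ ?_ ?_).symm
  · rintro ⟨t, v⟩ h
    have hv : ∏ i, (v i : F) ≠ 0 := by simp [prod_ne_zero_iff]
    simp only [mem_coe, mem_filter_univ, prod_pow] at h
    simp only [mem_coe, mem_filter_univ, Fin.sum_univ_succ,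
      Fin.prod_univ_succ, Fin.cons_zero, Fin.cons_succ, Units.val_div_eq_div_val, Units.coe_prod,
      div_mul_cancel₀ _ hv, ← h]
    rw [div_pow, div_eq_mul_inv, add_comm]
  · intro u h
    have hu : ∏ i : Fin n, (u i.succ : F) ≠ 0 := by simp [prod_ne_zero_iff]
    simp only [mem_coe, mem_filter_univ] at h
    simp only [mem_coe, mem_filter_univ, Fin.tail, prod_pow, Units.coe_prod]
    rw [← h, Fin.sum_univ_succ, Fin.prod_univ_succ, mul_pow,
      mul_inv_cancel_right₀ (pow_ne_zero _ hu), add_comm]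
  · rintro ⟨t, v⟩ -
    simp [Fin.prod_univ_succ]
  · rintro u -
    simp [Fin.prod_univ_succ, Fin.tail, Fin.cons_self_tail]

lemma card_units_pow_sum_eq_pow_mul_prod {c : F} (hc : c ≠ 0) :
    #{u : Fin (n + 1) → Fˣ | (∑ i, (u i : F)) ^ (n + 1) = c ^ (n + 1) * ∏ i, (u i : F)} =
      #{p : Fˣ × (Fin n → Fˣ) | ∑ i, (p.2 i : F) + p.1 ^ (n + 1) * (∏ i, (p.2 i : F))⁻¹ =
        c * p.1} := by
  refine (card_nbij (fun p => Fin.cons (p.1 ^ (n + 1) / ∏ i, p.2 i) p.2) ?_ ?_ ?_).symm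
  · rintro ⟨t, v⟩ h
    have hv : ∏ i, (v i : F) ≠ 0 := by simp [prod_ne_zero_iff]
    simp only [mem_coe, mem_filter_univ] at h
    simp only [mem_coe, mem_filter_univ, Fin.sum_univ_succ,
      Fin.prod_univ_succ, Fin.cons_zero, Fin.cons_succ, Units.val_div_eq_div_val, Units.coe_prod,
      Units.val_pow_eq_pow_val, div_mul_cancel₀ _ hv, ← mul_pow, ← h]
    rw [div_eq_mul_inv, add_comm]
  · rintro ⟨t, v⟩ ht ⟨s, w⟩ hs h
    obtain ⟨hts, rfl⟩ := Fin.cons_inj.1 h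
    rw [div_left_inj, Units.ext_iff] at hts
    push_cast at hts
    simp only [mem_coe, mem_filter_univ] at ht hs
    rw [← hts, ht] at hs
    exact Prod.ext (Units.ext (mul_left_cancel₀ hc hs)) rfl
  · intro u h
    simp only [mem_coe, mem_filter_univ] at h
    have hsum : ∑ i, (u i : F) ≠ 0 := by
      rintro hz
      simp [hz, hc, prod_eq_zero_iff] at h
    have hpow : ((∑ i, (u i : F)) / c) ^ (n + 1) = ∏ i, (u i : F) := by
      rw [div_pow, h, mul_div_cancel_left₀ _ (pow_ne_zero _ hc)]
    have htail : ∏ i : Fin n, (u i.succ : F) ≠ 0 := by simp [prod_ne_zero_iff]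
    have hhead : Units.mk0 _ (div_ne_zero hsum hc) ^ (n + 1) / ∏ i, Fin.tail u i = u 0 := by
      rw [div_eq_iff_eq_mul, Units.ext_iff]
      push_cast
      rw [Units.val_mk0, hpow, Fin.prod_univ_succ]
      rfl
    refine ⟨(Units.mk0 _ (div_ne_zero hsum hc), Fin.tail u), ?_, ?_⟩
    · simp only [mem_coe, mem_filter_univ, Units.val_mk0, hpow, Fin.tail]
      rw [mul_div_cancel₀ _ hc, Fin.prod_univ_succ, Fin.sum_univ_succ,
        mul_inv_cancel_right₀ htail, add_comm]
    · simp only [hhead, Fin.cons_self_tail]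

end Parametrization

section PointCounts

variable {F R : Type*} [Field F] [Fintype F] [Field R] {n : ℕ}

lemma card_units_filter_pow_eq_familySum {N : ℕ} [NeZero N] {κ : AddChar (ZMod N) (MulChar F R)}
    (hκ : Function.Injective κ) (v : Fˣ) : (#{z : Fˣ | (z : F) ^ N = v} : R) = familySum κ 1 v := by
  have h := card_filter_pow_eq_sum_family hκ v.ne_zero
  rw [natCast_card_filter, sum_eq_zero_add_sum_units (F := F), zero_pow (NeZero.ne N),
    if_neg v.ne_zero.symm, zero_add, ← natCast_card_filter] at h
  simpa only [familySum, Pi.one_apply, one_mul] using h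

lemma card_units_filter_eq_familySum_single {N : ℕ} [NeZero N]
    (κ : AddChar (ZMod N) (MulChar F R)) (v : Fˣ) :
    (#{z : Fˣ | (z : F) = v} : R) = familySum κ (Pi.single 0 1) v := by
  simp [familySum, Pi.single_apply, Units.val_inj, filter_eq', MulChar.one_apply_coe]

variable [CharZero R] [HasEnoughRootsOfUnity R (Monoid.exponent Fˣ)]

lemma card_mul_card_sum_pow_eq {κ : AddChar (ZMod (n + 1)) (MulChar F R)}
    (hκ : Function.Injective κ) {e : AddChar F R} (he : e ≠ 1) {ψ : F} (hψ : ψ ≠ 0) :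
    (Fintype.card F : R) *
        #{x : Fin (n + 1) → F | ∑ i, x i ^ (n + 1) = (n + 1 : ℕ) * ψ * ∏ i, x i} =
      (Fintype.card F : R) ^ (n + 1) + ((Fintype.card F : R) - 1) *
        (∑ k ∈ range (n + 1), convPow (fun b => gaussSum (κ b) e) k 0 * (n + 1).choose k +
          dworkMean (n + 1) ψ e (gaussFamily κ e 0 * convPow (gaussFamily κ e) n 0)) := by
  have h := card_mul_card_filter_eq (φ := powMonoidWithZeroHom n.succ_ne_zero) hκ he hψ
    (card_units_filter_pow_eq_familySum hκ) rfl
    (P := fun x => ∑ i, x i ^ (n + 1) = (n + 1 : ℕ) * ψ * ∏ i, x i)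
    (fun x hx => by rw [hx, mul_zero]; rfl) (card_units_sum_pow_eq_mul_prod (n + 1) _)
  simpa only [Pi.one_apply, one_mul, one_smul] using h

lemma card_mul_card_pow_sum_eq {κ : AddChar (ZMod (n + 1)) (MulChar F R)}
    (hκ : Function.Injective κ) {e : AddChar F R} (he : e ≠ 1) {ψ : F}
    (hψ : ((n + 1 : ℕ) : F) * ψ ≠ 0) :
    (Fintype.card F : R) * #{y : Fin (n + 1) → F |
        (∑ i, y i) ^ (n + 1) = ((n + 1 : ℕ) * ψ) ^ (n + 1) * ∏ i, y i} =
      (Fintype.card F : R) ^ (n + 1) + ((Fintype.card F : R) - 1) *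
        ((-1) ^ n + dworkMean (n + 1) ψ e (gaussFamily κ e 0 ^ (n + 1))) := by
  have h := card_mul_card_filter_eq (φ := MonoidWithZeroHom.id F) hκ he (right_ne_zero_of_mul hψ)
    (card_units_filter_eq_familySum_single κ) (Pi.single_eq_same _ _)
    (P := fun y => (∑ i, y i) ^ (n + 1) = ((n + 1 : ℕ) * ψ) ^ (n + 1) * ∏ i, y i)
    (fun x hx => by rw [hx, mul_zero, pow_eq_zero_iff n.succ_ne_zero]; rfl)
    (card_units_pow_sum_eq_pow_mul_prod hψ)
  have hgauss : (fun b => (Pi.single 0 1 : ZMod (n + 1) → R) b * gaussSum (κ b) e) =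
      Pi.single 0 (-1) := by
    ext b
    rcases eq_or_ne b 0 with rfl | hb
    · simp [gaussSum_one_left he]
    · simp [hb]
  have hfamily : (fun b => (Pi.single 0 1 : ZMod (n + 1) → R) b • gaussFamily κ e b) =
      Pi.single 0 (gaussFamily κ e 0) := by
    ext b η
    rcases eq_or_ne b 0 with rfl | hb
    · simp
    · simp [hb]
  have hbinom : ∑ k ∈ range (n + 1), (-1 : R) ^ k * (n + 1).choose k = (-1) ^ n := by
    have h := add_pow (-1 : R) 1 (n + 1)
    simp only [neg_add_cancel, zero_pow n.succ_ne_zero, one_pow, mul_one, sum_range_succ _ (n + 1),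
      Nat.choose_self, Nat.cast_one] at h
    linear_combination -h
  rw [h]
  simp only [hgauss, hfamily, convPow_single_zero, Pi.single_eq_same, ← pow_succ', hbinom]

end PointCounts

section DworkMeanFive

variable {F R : Type*} [Field F] [Fintype F] [Field R]

lemma gaussSum_family_mul_neg {N : ℕ} [NeZero N] {κ : AddChar (ZMod N) (MulChar F R)}
    (hκ : Function.Injective κ) (hN : Odd N) {e : AddChar F R} (he : e ≠ 1) {k : ZMod N}
    (hk : k ≠ 0) : gaussSum (κ k) e * gaussSum (κ (-k)) e = Fintype.card F := by
  have hone : κ k ≠ 1 := fun h => hk (hκ (h.trans (AddChar.map_zero_eq_one κ).symm))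
  rw [AddChar.map_neg_eq_inv, gaussSum_mul_gaussSum_inv _ he, if_neg hone, sub_zero,
    family_apply_neg_one κ hN, mul_one]

variable {κ : AddChar (ZMod 5) (MulChar F R)} (hκ : Function.Injective κ) {e : AddChar F R}
  (he : e ≠ 1)
include hκ he

lemma prod_gaussSum_five :
    ∏ j ∈ range (5 - 1), gaussSum (κ (j + 1)) e = (Fintype.card F : R) ^ 2 := by
  have h₁ := gaussSum_family_mul_neg hκ (by decide) he (k := 1) (by decide)
  have h₂ := gaussSum_family_mul_neg hκ (by decide) he (k := 2) (by decide)
  simp only [prod_range_succ, prod_range_zero]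
  reduce_mod_char at *
  linear_combination gaussSum (κ 2) e * gaussSum (κ 3) e * h₁ + (Fintype.card F : R) * h₂

variable [CharZero R] [HasEnoughRootsOfUnity R (Monoid.exponent Fˣ)] {ψ : F} (hψ : ψ ≠ 0)
include hψ

lemma dworkMean_prod_mul_gaussFamily_five {s : Finset (ZMod 5)} (hs : #s = 3)
    {m m' d d' : ZMod 5} (hsd : sᶜ = {d, d'}) (hm : m ≠ d) (hm' : m' ≠ d') :
    dworkMean 5 ψ e ((∏ b ∈ s, gaussFamily κ e b) * (gaussFamily κ e m * gaussFamily κ e m')) =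
      Fintype.card F * (gaussSum (κ (m - d)) e * gaussSum (κ (m' - d')) e *
          hypergeometricSum (ψ ^ 5)⁻¹ (κ (m - d')) (κ (d' - m')) (κ (d - m))) -
        ∑ b ∈ s, gaussSum (κ (b - d)) e * gaussSum (κ (b - d')) e *
          (gaussSum (κ (m - b)) e * gaussSum (κ (m' - b)) e) := by
  have hd : d ≠ d' := by
    rintro rfl
    have hcompl := card_compl s
    rw [hsd, hs, pair_eq_singleton, card_singleton, ZMod.card] at hcompl
    exact absurd hcompl (by decide)
  have hq : (Fintype.card F : R) ≠ 0 := Nat.cast_ne_zero.2 Fintype.card_ne_zero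
  have h := prod_gaussSum_mul_dworkMean_prod_mul hκ he (by decide) hψ (by rw [hs]; decide)
    (s := s) (gaussFamily κ e m * gaussFamily κ e m')
  have hhyp := expect_mul_gaussSum_eq_hypergeometricSum (hκ.ne hm) (hκ.ne hm') e
    (pow_ne_zero 5 hψ)
  rw [prod_gaussSum_five hκ he, hs, hsd] at h
  simp only [prod_pair hd, Pi.mul_apply, gaussFamily] at h
  refine mul_left_cancel₀ (pow_ne_zero 2 hq) (h.trans ?_)
  have hcomm (η : MulChar F R) : η (ψ ^ 5) * ((gaussSum (κ d * η)⁻¹ e * gaussSum (κ d' * η)⁻¹ e) *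
      (gaussSum (κ m * η) e * gaussSum (κ m' * η) e)) =
      η (ψ ^ 5) * ((gaussSum (κ m * η) e * gaussSum (κ d * η)⁻¹ e) *
        (gaussSum (κ m' * η) e * gaussSum (κ d' * η)⁻¹ e)) := by ring
  simp only [hcomm, hhyp]
  simp only [← AddChar.map_neg_eq_inv, ← AddChar.map_add_eq_mul, neg_sub, ← sub_eq_add_neg,
    neg_add_eq_sub, family_apply_neg_one κ (by decide : Odd 5), family_apply_pow κ _ hψ]
  ring

lemma dworkMean_prod_gaussFamily_five (hψ5 : ψ ^ 5 ≠ 1) :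
    dworkMean 5 ψ e (∏ b, gaussFamily κ e b) = -5 * (Fintype.card F : R) ^ 2 := by
  have h := prod_gaussSum_mul_dworkMean_prod_mul hκ he (by decide) hψ (s := univ) (by decide) 1
  simp only [prod_gaussSum_five hκ he, mul_one, compl_univ, prod_empty, Pi.one_apply,
    expect_mulChar_apply, if_neg hψ5, sum_const, card_univ, ZMod.card] at h
  have hq : (Fintype.card F : R) ≠ 0 := Nat.cast_ne_zero.2 Fintype.card_ne_zero
  refine mul_left_cancel₀ (pow_ne_zero 2 hq) (h.trans ?_)
  simp only [mul_zero, Nat.add_one_sub_one, nsmul_eq_mul, Nat.cast_ofNat, mul_one, zero_sub]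
  ring

lemma dworkMean_gaussFamily_three_one_one :
    dworkMean 5 ψ e (gaussFamily κ e 0 ^ 3 * gaussFamily κ e 1 * gaussFamily κ e 4) =
      (Fintype.card F : R) ^ 2 * hypergeometricSum (ψ ^ 5)⁻¹ (κ 2) (κ 3) (κ 2) -
        Fintype.card F - gaussSum (κ 1) e ^ 3 * gaussSum (κ 2) e -
        gaussSum (κ 4) e ^ 3 * gaussSum (κ 3) e := by
  have h := dworkMean_prod_mul_gaussFamily_five hκ he hψ (s := {0, 1, 4})
    (m := 0) (m' := 0) (d := 2) (d' := 3) (by decide) (by decide) (by decide) (by decide)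
  have h₂ := gaussSum_family_mul_neg hκ (by decide) he (k := 2) (by decide)
  have h₀ : gaussSum (κ 0) e = -1 := by rw [AddChar.map_zero_eq_one, gaussSum_one_left he]
  rw [prod_insert (by decide), prod_insert (by decide), prod_singleton, sum_insert (by decide),
    sum_insert (by decide), sum_singleton] at h
  reduce_mod_char at h h₂
  have hprod : gaussFamily κ e 0 ^ 3 * gaussFamily κ e 1 * gaussFamily κ e 4 =
      gaussFamily κ e 0 * (gaussFamily κ e 1 * gaussFamily κ e 4) *
        (gaussFamily κ e 0 * gaussFamily κ e 0) := by ring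
  rw [hprod, h, h₀]
  linear_combination (Fintype.card F * hypergeometricSum (ψ ^ 5)⁻¹ (κ 2) (κ 3) (κ 2) - 1) * h₂

lemma dworkMean_gaussFamily_two_two_one :
    dworkMean 5 ψ e (gaussFamily κ e 0 ^ 2 * gaussFamily κ e 1 ^ 2 * gaussFamily κ e 3) =
      (Fintype.card F : R) ^ 2 * hypergeometricSum (ψ ^ 5)⁻¹ (κ 2) (κ 4) (κ 1) +
        gaussSum (κ 1) e ^ 2 * gaussSum (κ 3) e + gaussSum (κ 4) e ^ 2 * gaussSum (κ 2) e -
        (Fintype.card F : R) ^ 2 := by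
  have h := dworkMean_prod_mul_gaussFamily_five hκ he hψ (s := {0, 1, 3})
    (m := 1) (m' := 0) (d := 2) (d' := 4) (by decide) (by decide) (by decide) (by decide)
  have h₁ := gaussSum_family_mul_neg hκ (by decide) he (k := 1) (by decide)
  have h₂ := gaussSum_family_mul_neg hκ (by decide) he (k := 2) (by decide)
  have h₀ : gaussSum (κ 0) e = -1 := by rw [AddChar.map_zero_eq_one, gaussSum_one_left he]
  rw [prod_insert (by decide), prod_insert (by decide), prod_singleton, sum_insert (by decide),
    sum_insert (by decide), sum_singleton] at h
  reduce_mod_char at h h₁ h₂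
  have hprod : gaussFamily κ e 0 ^ 2 * gaussFamily κ e 1 ^ 2 * gaussFamily κ e 3 =
      gaussFamily κ e 0 * (gaussFamily κ e 1 * gaussFamily κ e 3) *
        (gaussFamily κ e 1 * gaussFamily κ e 0) := by ring
  rw [hprod, h, h₀]
  linear_combination (Fintype.card F * hypergeometricSum (ψ ^ 5)⁻¹ (κ 2) (κ 4) (κ 1)) * h₁ -
    Fintype.card F * h₁ - gaussSum (κ 1) e * gaussSum (κ 4) e * h₂

end DworkMeanFive

section ConvPowFive

lemma sum_compl_zero_zmod_five {M : Type*} [AddCommMonoid M] (f : ZMod 5 → M) :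
    ∑ j ∈ {0}ᶜ, f j = f 1 + f 2 + f 3 + f 4 := by
  have h : ({0}ᶜ : Finset (ZMod 5)) = {1, 2, 3, 4} := by decide
  rw [h, sum_insert (by decide), sum_insert (by decide), sum_pair (by decide), add_assoc, add_assoc]

@[to_additive]
lemma prod_zmod_five {M : Type*} [CommMonoid M] (f : ZMod 5 → M) :
    ∏ j, f j = f 0 * f 1 * f 2 * f 3 * f 4 :=
  Fin.prod_univ_five f

variable {S : Type*} [CommSemiring S]

lemma convPow_two {N : ℕ} [NeZero N] (A : ZMod N → S) (k : ZMod N) :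
    convPow A 2 k = ∑ c, A c * A (k - c) := by
  simp only [convPow, Pi.single_apply, sub_eq_zero, mul_ite, mul_one, mul_zero, sum_ite_eq,
    mem_univ, if_true]

variable (A : ZMod 5 → S)

lemma convPow_three_zmod_five : convPow A 3 0 = A 0 ^ 3 +
      3 * ∑ j ∈ {0}ᶜ, (A 0 * A j * A (4 * j) + A j ^ 2 * A (3 * j)) := by
  rw [convPow]
  simp only [convPow_two, sum_compl_zero_zmod_five, sum_zmod_five]
  reduce_mod_char
  ring

lemma convPow_four_zmod_five : convPow A 4 0 = A 0 ^ 4 + 24 * (A 1 * A 2 * A 3 * A 4) +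
      ∑ j ∈ {0}ᶜ, (6 * (A 0 ^ 2 * A j * A (4 * j)) + 12 * (A 0 * A j ^ 2 * A (3 * j)) +
        4 * (A j ^ 3 * A (2 * j)) + 3 * (A j ^ 2 * A (4 * j) ^ 2)) := by
  rw [convPow, convPow]
  simp only [convPow_two, sum_compl_zero_zmod_five, sum_zmod_five]
  reduce_mod_char
  ring

end ConvPowFive

section FivefoldConvolution

lemma sum_compl_zero_mul_left {G M : Type*} [MonoidWithZero G] [Fintype G] [DecidableEq G]
    [AddCommMonoid M] {c : G} (hc : IsUnit c) (f : G → M) :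
    ∑ j ∈ {0}ᶜ, f (c * j) = ∑ j ∈ {0}ᶜ, f j :=
  sum_equiv hc.unit.mulLeft (by simp [hc.mul_right_eq_zero]) fun _ _ => rfl

variable {F R : Type*} [Field F] [Fintype F] [Field R] {κ : AddChar (ZMod 5) (MulChar F R)}

lemma sum_choose_mul_convPow_gaussSum_five (hκ : Function.Injective κ) {e : AddChar F R}
    (he : e ≠ 1) :
    ∑ k ∈ range 5, convPow (fun b => gaussSum (κ b) e) k 0 * Nat.choose 5 k =
      1 + 180 * (Fintype.card F : R) ^ 2 + 40 * Fintype.card F +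
        ∑ j ∈ {0}ᶜ, (20 * (gaussSum (κ j) e ^ 3 * gaussSum (κ (2 * j)) e) -
        30 * (gaussSum (κ j) e ^ 2 * gaussSum (κ (3 * j)) e)) := by
  have h₁ := gaussSum_family_mul_neg hκ (by decide) he (k := 1) (by decide)
  have h₂ := gaussSum_family_mul_neg hκ (by decide) he (k := 2) (by decide)
  have h₀ : gaussSum (κ 0) e = -1 := by rw [AddChar.map_zero_eq_one, gaussSum_one_left he]
  reduce_mod_char at h₁ h₂
  have hone : convPow (fun b => gaussSum (κ b) e) 1 0 = -1 := by
    simp [convPow, Pi.single_apply, gaussSum_one_left he]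
  have hzero : convPow (fun b => gaussSum (κ b) e) 0 0 = 1 := Pi.single_eq_same _ _
  have hchoose : Nat.choose 5 2 = 10 ∧ Nat.choose 5 3 = 10 := by decide
  simp only [sum_range_succ, range_zero, sum_empty, convPow_four_zmod_five,
    convPow_three_zmod_five, convPow_two, hone, hzero, sum_zmod_five, sum_compl_zero_zmod_five,
    hchoose, Nat.choose_zero_right, Nat.choose_one_right, Nat.choose_succ_self_right]
  reduce_mod_char
  simp only [h₀]
  push_cast
  linear_combination
    (20 + 120 * (gaussSum (κ 2) e * gaussSum (κ 3) e) +
      30 * (gaussSum (κ 1) e * gaussSum (κ 4) e + Fintype.card F)) * h₁ +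
    (20 + 120 * (Fintype.card F : R) +
      30 * (gaussSum (κ 2) e * gaussSum (κ 3) e + Fintype.card F)) * h₂

variable [CharZero R] {ψ : F}

lemma dworkMean_mul_convPow_four_zmod_five (κ : AddChar (ZMod 5) (MulChar F R))
    (e : AddChar F R) (hψ : ψ ≠ 0) :
    dworkMean 5 ψ e (gaussFamily κ e 0 * convPow (gaussFamily κ e) 4 0) =
      dworkMean 5 ψ e (gaussFamily κ e 0 ^ 5) + 24 * dworkMean 5 ψ e (∏ b, gaussFamily κ e b) +
      ∑ j ∈ {0}ᶜ,
        (10 * dworkMean 5 ψ e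
            (gaussFamily κ e 0 ^ 3 * gaussFamily κ e j * gaussFamily κ e (4 * j)) +
          15 * dworkMean 5 ψ e
            (gaussFamily κ e 0 ^ 2 * gaussFamily κ e j ^ 2 * gaussFamily κ e (3 * j))) := by
  set f := gaussFamily κ e
  set D := dworkMean 5 ψ e
  have hshift (c b₀ b₁ b₂ b₃ b₄ : ZMod 5) :
      D (f (b₀ + c) * f (b₁ + c) * f (b₂ + c) * f (b₃ + c) * f (b₄ + c)) =
        D (f b₀ * f b₁ * f b₂ * f b₃ * f b₄) := by
    simpa [Fin.prod_univ_five] using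
      dworkMean_prod_gaussFamily_add κ e hψ c univ ![b₀, b₁, b₂, b₃, b₄]
  -- Translating the classes `0, j, j, j, 2j` by `-j` gives `-j, 0, 0, 0, j`, and translating
  -- `0, j, j, 4j, 4j` by `j` gives `j, 2j, 2j, 0, 0`.
  have h31 (j : ZMod 5) : D (f 0 * (f j ^ 3 * f (2 * j))) = D (f 0 ^ 3 * f j * f (4 * j)) := by
    have h := hshift j 0 0 0 j (4 * j)
    simp only [zero_add, ← two_mul, ← add_one_mul] at h
    reduce_mod_char at h
    exact (congrArg D (by ring)).trans (h.trans (congrArg D (by ring)))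
  have h22 (j : ZMod 5) :
      D (f 0 * (f j ^ 2 * f (4 * j) ^ 2)) = D (f 0 ^ 2 * f (2 * j) ^ 2 * f (3 * (2 * j))) := by
    have h := hshift j 0 (4 * j) (4 * j) j j
    simp only [zero_add, ← two_mul, ← add_one_mul, ← mul_assoc] at h ⊢
    reduce_mod_char at h ⊢
    exact (congrArg D (by ring)).trans (h.symm.trans (congrArg D (by ring)))
  have hsplit : f 0 * convPow f 4 0 = f 0 ^ 5 + (24 : R) • ∏ b, f b + ∑ j ∈ {0}ᶜ,
      ((6 : R) • (f 0 ^ 3 * f j * f (4 * j)) + (12 : R) • (f 0 ^ 2 * f j ^ 2 * f (3 * j)) +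
        (4 : R) • (f 0 * (f j ^ 3 * f (2 * j))) + (3 : R) • (f 0 * (f j ^ 2 * f (4 * j) ^ 2))) := by
    rw [convPow_four_zmod_five]
    simp only [Algebra.smul_def, map_ofNat]
    rw [mul_add, mul_add, mul_sum, prod_zmod_five]
    exact congrArg₂ _ (by ring) (sum_congr rfl fun j _ => by ring)
  have hreindex := sum_compl_zero_mul_left (.of_mul_eq_one 3 rfl : IsUnit (2 : ZMod 5))
    fun j => D (f 0 ^ 2 * f j ^ 2 * f (3 * j))
  rw [hsplit]
  simp only [map_add, map_sum, map_smul, smul_eq_mul, h31, h22, sum_add_distrib, ← mul_sum,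
    hreindex]
  ring

end FivefoldConvolution

section MirrorComparison

lemma isUnit_of_mem_compl_zero_zmod_five {j : ZMod 5} (hj : j ∈ ({0}ᶜ : Finset (ZMod 5))) :
    IsUnit j := by
  have h : ∀ j : ZMod 5, j ≠ 0 → ∃ i, j * i = 1 := by decide
  obtain ⟨i, hi⟩ := h j (by simpa using hj)
  exact .of_mul_eq_one i hi

variable {F R : Type*} [Field F] [Fintype F] [Field R]

lemma gaussFamily_compAddMonoidHom {M N : ℕ} (κ : AddChar (ZMod N) (MulChar F R))
    (f : ZMod M →+ ZMod N) (e : AddChar F R) (b : ZMod M) :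
    gaussFamily (κ.compAddMonoidHom f) e b = gaussFamily κ e (f b) := rfl

variable [CharZero R] [HasEnoughRootsOfUnity R (Monoid.exponent Fˣ)]
  {κ : AddChar (ZMod 5) (MulChar F R)} (hκ : Function.Injective κ)
  {e : AddChar F R} (he : e ≠ 1) {ψ : F} (hψ : ψ ≠ 0)
include hκ he hψ

lemma sum_dworkMean_gaussFamily_three_one_one :
    ∑ j ∈ {0}ᶜ, dworkMean 5 ψ e
        (gaussFamily κ e 0 ^ 3 * gaussFamily κ e j * gaussFamily κ e (4 * j)) =
      (Fintype.card F : R) ^ 2 *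
          ∑ j ∈ {0}ᶜ, hypergeometricSum (ψ ^ 5)⁻¹ (κ (2 * j)) (κ (3 * j)) (κ (2 * j)) -
        4 * Fintype.card F - 2 * ∑ j ∈ {0}ᶜ, gaussSum (κ j) e ^ 3 * gaussSum (κ (2 * j)) e := by
  have hterm (j : ZMod 5) (hj : j ∈ ({0}ᶜ : Finset (ZMod 5))) :=
    dworkMean_gaussFamily_three_one_one (κ := κ.compAddMonoidHom (.mulRight j))
      (hκ.comp (isUnit_of_mem_compl_zero_zmod_five hj).mul_left_injective) he hψ
  simp only [gaussFamily_compAddMonoidHom, AddChar.compAddMonoidHom_apply,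
    AddMonoidHom.coe_mulRight, zero_mul, one_mul] at hterm
  have hneg := sum_compl_zero_mul_left (.of_mul_eq_one 4 rfl : IsUnit (4 : ZMod 5))
    fun j => gaussSum (κ j) e ^ 3 * gaussSum (κ (2 * j)) e
  simp only [← mul_assoc] at hneg
  reduce_mod_char at hneg
  rw [sum_congr rfl hterm]
  simp only [sum_sub_distrib, ← mul_sum, hneg,
    sum_compl_zero_zmod_five fun _ => (Fintype.card F : R)]
  ring

lemma sum_dworkMean_gaussFamily_two_two_one :
    ∑ j ∈ {0}ᶜ, dworkMean 5 ψ e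
        (gaussFamily κ e 0 ^ 2 * gaussFamily κ e j ^ 2 * gaussFamily κ e (3 * j)) =
      (Fintype.card F : R) ^ 2 *
          ∑ j ∈ {0}ᶜ, hypergeometricSum (ψ ^ 5)⁻¹ (κ (2 * j)) (κ (4 * j)) (κ j) +
        2 * ∑ j ∈ {0}ᶜ, gaussSum (κ j) e ^ 2 * gaussSum (κ (3 * j)) e -
        4 * (Fintype.card F : R) ^ 2 := by
  have hterm (j : ZMod 5) (hj : j ∈ ({0}ᶜ : Finset (ZMod 5))) :=
    dworkMean_gaussFamily_two_two_one (κ := κ.compAddMonoidHom (.mulRight j))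
      (hκ.comp (isUnit_of_mem_compl_zero_zmod_five hj).mul_left_injective) he hψ
  simp only [gaussFamily_compAddMonoidHom, AddChar.compAddMonoidHom_apply,
    AddMonoidHom.coe_mulRight, zero_mul, one_mul] at hterm
  have hneg := sum_compl_zero_mul_left (.of_mul_eq_one 4 rfl : IsUnit (4 : ZMod 5))
    fun j => gaussSum (κ j) e ^ 2 * gaussSum (κ (3 * j)) e
  simp only [← mul_assoc] at hneg
  reduce_mod_char at hneg
  rw [sum_congr rfl hterm]
  simp only [sum_sub_distrib, sum_add_distrib, ← mul_sum, hneg,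
    sum_compl_zero_zmod_five fun _ => (Fintype.card F : R) ^ 2]
  ring

lemma card_mul_card_dwork_sub_card_mirror (h5 : (5 : F) ≠ 0) (hψ5 : ψ ^ 5 ≠ 1) :
    (Fintype.card F : R) *
        (#{x : Fin 5 → F | ∑ i, x i ^ 5 = 5 * ψ * ∏ i, x i} -
          #{y : Fin 5 → F | (∑ i, y i) ^ 5 = (5 * ψ) ^ 5 * ∏ i, y i}) =
      Fintype.card F ^ 2 * (Fintype.card F - 1) *
        (10 * ∑ j ∈ {0}ᶜ, hypergeometricSum (ψ ^ 5)⁻¹ (κ (2 * j)) (κ (3 * j)) (κ (2 * j)) +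
          15 * ∑ j ∈ {0}ᶜ, hypergeometricSum (ψ ^ 5)⁻¹ (κ (2 * j)) (κ (4 * j)) (κ j)) := by
  have hX := card_mul_card_sum_pow_eq (n := 4) hκ he hψ
  have hY := card_mul_card_pow_sum_eq (n := 4) hκ he (mul_ne_zero (by exact_mod_cast h5) hψ)
  have h₃₁₁ := sum_dworkMean_gaussFamily_three_one_one hκ he hψ
  have h₂₂₁ := sum_dworkMean_gaussFamily_two_two_one hκ he hψ
  simp only [Nat.reduceAdd, Nat.cast_ofNat] at hX hY
  rw [sum_choose_mul_convPow_gaussSum_five hκ he, dworkMean_mul_convPow_four_zmod_five κ e hψ,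
    dworkMean_prod_gaussFamily_five hκ he hψ hψ5] at hX
  simp only [sum_add_distrib, sum_sub_distrib, ← mul_sum] at hX
  linear_combination hX - hY + ((Fintype.card F : R) - 1) * (10 * h₃₁₁ + 15 * h₂₂₁)

end MirrorComparison

section SuperellipticCount

variable {F R : Type*} [Field F] [Fintype F] [Field R] {N : ℕ} [NeZero N]
  {κ : AddChar (ZMod N) (MulChar F R)} (hκ : Function.Injective κ)
include hκ

lemma card_superelliptic_curve (w : F → F) :
    (#{p : F × F | p.2 ^ N = w p.1} : R) = Fintype.card F + ∑ j ∈ {0}ᶜ, ∑ x, κ j (w x) := by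
  have hfiber (b : F) : (#{a : F | a ^ N = b} : R) = 1 + ∑ j ∈ {0}ᶜ, κ j b := by
    rcases eq_or_ne b 0 with rfl | hb
    · simp [natCast_card_filter, NeZero.ne N, MulChar.map_zero]
    · rw [card_filter_pow_eq_sum_family hκ hb, Fintype.sum_eq_add_sum_compl 0,
        AddChar.map_zero_eq_one, MulChar.one_apply hb.isUnit]
  simp only [natCast_card_filter, Fintype.sum_prod_type] at hfiber ⊢
  simp only [hfiber, sum_add_distrib, sum_const, card_univ, nsmul_eq_mul, mul_one]
  rw [sum_comm]

lemma card_hypergeometric_curve {a b c : ℕ} (ha : a ≠ 0) (hb : b ≠ 0) (hc : c ≠ 0) (l : F) :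
    (#{p : F × F | p.2 ^ N = p.1 ^ a * (1 - p.1) ^ b * (1 - l * p.1) ^ c} : R) =
      Fintype.card F +
        ∑ j ∈ {0}ᶜ, hypergeometricSum l (κ (a * j)) (κ (b * j)) (κ (c * j)) := by
  have hpow (j : ZMod N) {m : ℕ} (hm : m ≠ 0) (x : F) : κ j (x ^ m) = κ (m * j) x := by
    rw [map_pow, ← MulChar.pow_apply' _ hm, ← AddChar.map_nsmul_eq_pow, nsmul_eq_mul]
  simp only [card_superelliptic_curve hκ fun x => x ^ a * (1 - x) ^ b * (1 - l * x) ^ c,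
    hypergeometricSum, map_mul, hpow _ ha, hpow _ hb, hpow _ hc]

end SuperellipticCount

section Existence

lemma natCast_ne_zero_of_card_mod_eq_one {F : Type*} [Field F] [Fintype F] {m : ℕ}
    (h : Fintype.card F % m = 1) : (m : F) ≠ 0 := fun hm => by
  have hq : (Fintype.card F : F) = 0 := Nat.cast_card_eq_zero F
  rw [← Nat.mod_add_div (Fintype.card F) m, h] at hq
  simp [hm] at hq

lemma exists_injective_family {F : Type*} [Field F] [Fintype F] {N : ℕ} [NeZero N]
    (h : N ∣ Fintype.card F - 1) :
    ∃ κ : AddChar (ZMod N) (MulChar F ℂ), Function.Injective κ := by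
  obtain ⟨χ, rfl⟩ :=
    MulChar.exists_mulChar_orderOf F h (Complex.isPrimitiveRoot_exp N (NeZero.ne N))
  refine ⟨AddChar.zmodChar _ (pow_orderOf_eq_one χ), fun a b hab => ?_⟩
  simp only [AddChar.zmodChar_apply] at hab
  exact ZMod.val_injective _ (pow_injOn_Iio_orderOf (ZMod.val_lt a) (ZMod.val_lt b) hab)

end Existence

end DworkQuintic

/-- The `n = 5` example: with `q ≡ 1 (mod 5)`, `ψ ≠ 0` and `ψ^5 ≠ 1`, the affine counts of
the Dwork quintic, of its singular mirror, and of the two hypergeometric curves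
`A : y^5 = x^2(1−x)^3(1−x/ψ^5)^2` and `B : y^5 = x^2(1−x)^4(1−x/ψ^5)` satisfy
`N_X = N_Y + 10·q·(q−1)·(N_A − q) + 15·q·(q−1)·(N_B − q)`. -/
theorem statement17 {F : Type*} [Field F] [Fintype F]
    (hq : Fintype.card F % 5 = 1)
    (ψ : F) (hψ : ψ ≠ 0) (hψ5 : ψ ^ 5 ≠ 1) :
    ((Finset.univ.filter (fun x : Fin 5 → F =>
        ∑ i, x i ^ 5 = 5 * ψ * ∏ i, x i)).card : ℤ)
      = ((Finset.univ.filter (fun y : Fin 5 → F =>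
            (∑ i, y i) ^ 5 = (5 * ψ) ^ 5 * ∏ i, y i)).card : ℤ)
        + 10 * (Fintype.card F : ℤ) * ((Fintype.card F : ℤ) - 1) *
            (((Finset.univ.filter (fun p : F × F =>
                p.2 ^ 5 = p.1 ^ 2 * (1 - p.1) ^ 3 * (1 - (ψ ^ 5)⁻¹ * p.1) ^ 2)).card : ℤ)
              - (Fintype.card F : ℤ))
        + 15 * (Fintype.card F : ℤ) * ((Fintype.card F : ℤ) - 1) *
            (((Finset.univ.filter (fun p : F × F =>
                p.2 ^ 5 = p.1 ^ 2 * (1 - p.1) ^ 4 * (1 - (ψ ^ 5)⁻¹ * p.1))).card : ℤ)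
              - (Fintype.card F : ℤ)) := by
  obtain ⟨e, he₁⟩ := AddChar.exists_apply_ne_zero.2 (one_ne_zero (α := F))
  have he : e ≠ 1 := AddChar.ne_one_iff.2 ⟨1, he₁⟩
  obtain ⟨κ, hκ⟩ := DworkQuintic.exists_injective_family (F := F) (N := 5) (by omega)
  have h5 : (5 : F) ≠ 0 := DworkQuintic.natCast_ne_zero_of_card_mod_eq_one (m := 5) hq
  have hXY := DworkQuintic.card_mul_card_dwork_sub_card_mirror hκ he hψ h5 hψ5
  have hA := DworkQuintic.card_hypergeometric_curve hκ two_ne_zero three_ne_zero two_ne_zero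
    (ψ ^ 5)⁻¹
  have hB := DworkQuintic.card_hypergeometric_curve hκ two_ne_zero four_ne_zero one_ne_zero
    (ψ ^ 5)⁻¹
  have hq0 : (Fintype.card F : ℂ) ≠ 0 := Nat.cast_ne_zero.2 Fintype.card_ne_zero
  simp only [Nat.cast_ofNat, Nat.cast_one, one_mul, pow_one] at hA hB
  rw [← Int.cast_inj (α := ℂ)]
  push_cast
  refine mul_left_cancel₀ hq0 ?_
  linear_combination hXY -
    (Fintype.card F : ℂ) ^ 2 * ((Fintype.card F : ℂ) - 1) * (10 * hA + 15 * hB)
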